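/- arXiv:1302.4703 — 2 statements merged into one kernel-verified Lean document; each statement's English description precedes it below -/
import Mathlib

section
/- For every maximal cap S in AG(4,3) with anchor the zero vector, the number of linear automorphisms T of (Fin 4 → ZMod 3) with T(S) = S (as a set) is exactly 2880. -/
/-- A cap in `AG(n,3)`: a finite set of points of `Fin n → ZMod 3` containing no
three distinct collinear points (three distinct points are collinear iff they sum to zero). -/
def IsCap {n : ℕ} (C : Finset (Fin n → ZMod 3)) : Prop :=
  ∀ x ∈ C, ∀ y ∈ C, ∀ z ∈ C, x ≠ y → x ≠ z → y ≠ z → x + y + z ≠ 0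

/-- A maximal cap: a cap of largest possible size. -/
def MaximalCap {n : ℕ} (C : Finset (Fin n → ZMod 3)) : Prop :=
  IsCap C ∧ ∀ D : Finset (Fin n → ZMod 3), IsCap D → D.card ≤ C.card

/-!
Counting linear functionals vanishing on sums of one, two or three points of a cap gives moments of
its hyperplane sections. As a cap has at most 2, 4 and 9 points in dimensions 1, 2 and 3, these
moments bound its size in dimension 4 by 20, and they force a cap `S` of size 20 to be symmetric
about its anchor. If the anchor is zero, then `S = -S` is an ovoid of `PG(3,3)`, counted with both
representatives of each point.

A dimension count gives a nonzero quadratic form that vanishes on `S`. Any two independent points of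
`S` span a hyperbolic plane whose orthogonal complement is anisotropic, so `S` is equivalent to a
standard ovoid, and the equivalence can carry any such pair to a given one. The stabilizer of `S`
thus acts transitively on the `20 * 18 = 360` ordered independent pairs, and fixing one pair leaves
the orthogonal group of `x ^ 2 + y ^ 2` over `ZMod 3`, which has order 8.
-/

namespace TernaryCap

open Finset Module

section LinearAlgebra

variable {K V : Type*} [Field K] [AddCommGroup V] [Module K V]

lemma exists_smul_eq_of_ker_le {f g : Dual K V} (h : LinearMap.ker f ≤ LinearMap.ker g) :
    ∃ c : K, c • f = g := by
  have := mem_span_of_iInf_ker_le_ker (L := fun _ : Unit => f) (iInf_const.trans_le h)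
  rwa [Set.range_const, Submodule.mem_span_singleton] at this

variable [FiniteDimensional K V]

lemma finrank_ker_eq {n : ℕ} (hV : finrank K V = n + 1) {f : Dual K V} (hf : f ≠ 0) :
    finrank K (LinearMap.ker f) = n := by
  have := Dual.finrank_ker_add_one_of_ne_zero hf
  lia

lemma exists_ne_zero_forall_apply_eq_zero {ι : Type*} [Fintype ι]
    (hι : Fintype.card ι < finrank K V) (g : ι → Dual K V) : ∃ v ≠ 0, ∀ i, g i v = 0 := by
  have ker_ne_bot : LinearMap.ker (LinearMap.pi g) ≠ ⊥ :=
    LinearMap.ker_ne_bot_of_finrank_lt (by rwa [finrank_fintype_fun_eq_card])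
  obtain ⟨v, hv, hv₀⟩ := Submodule.exists_mem_ne_zero_of_ne_bot ker_ne_bot
  exact ⟨v, hv₀, congrFun hv⟩

lemma exists_dual_ne_zero_forall_apply_eq_zero {ι : Type*} [Fintype ι]
    (hι : Fintype.card ι < finrank K V) (v : ι → V) : ∃ u : Dual K V, u ≠ 0 ∧ ∀ i, u (v i) = 0 :=
  exists_ne_zero_forall_apply_eq_zero (hι.trans_eq Subspace.dual_finrank_eq.symm)
    fun i => Dual.eval K V (v i)

lemma exists_sum_smul_eq_of_apply_eq_zero {n : ℕ} (hV : finrank K V = n + 1) {u : Dual K V}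
    (hu : u ≠ 0) {v : Fin n → V} (li : LinearIndependent K v) (hv : ∀ i, u (v i) = 0) {x : V}
    (hx : u x = 0) : ∃ c : Fin n → K, ∑ i, c i • v i = x := by
  have span_eq : Submodule.span K (Set.range v) = LinearMap.ker u := by
    refine Submodule.eq_of_le_of_finrank_eq
      (Submodule.span_le.2 (Set.range_subset_iff.2 hv)) ?_
    rw [finrank_span_eq_card li, Fintype.card_fin]
    exact (finrank_ker_eq hV hu).symm
  rw [← Submodule.mem_span_range_iff_exists_fun, span_eq]
  exact hx

lemma exists_symmetric_bilinForm_apply_self_eq_zero {T : Finset V}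
    (hT : #T < (finrank K V + 1).choose 2) :
    ∃ B : LinearMap.BilinForm K V, B ≠ 0 ∧ (∀ x y, B x y = B y x) ∧ ∀ x ∈ T, B x x = 0 := by
  let e := finBasis K V
  let toMatrix : (Sym2 (Fin (finrank K V)) → K) →ₗ[K]
      Matrix (Fin (finrank K V)) (Fin (finrank K V)) K :=
    { toFun c := .of fun i j => c s(i, j), map_add' _ _ := rfl, map_smul' _ _ := rfl }
  let toForm := (Matrix.toBilin e).toLinearMap ∘ₗ toMatrix
  obtain ⟨c, hc, isotropic⟩ := exists_ne_zero_forall_apply_eq_zero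
    (g := fun x : T => LinearMap.applyₗ (x : V) ∘ₗ LinearMap.applyₗ (x : V) ∘ₗ toForm)
    (by rwa [finrank_fintype_fun_eq_card, Sym2.card, Fintype.card_coe, Fintype.card_fin])
  refine ⟨toForm c, fun h => hc ?_, fun x y => ?_, fun x hx => isotropic ⟨x, hx⟩⟩
  · have matrix_eq : toMatrix c = 0 := (Matrix.toBilin e).map_eq_zero_iff.1 h
    exact funext <| Sym2.ind fun i j => congrFun₂ matrix_eq i j
  · have expand (x y : V) :
        toForm c x y = ∑ i, ∑ j, e.repr x i * c s(i, j) * e.repr y j := Matrix.toBilin_apply ..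
    rw [expand, expand, sum_comm]
    refine sum_congr rfl fun i _ => sum_congr rfl fun j _ => ?_
    rw [Sym2.eq_swap]
    ring

lemma exists_smul_add_smul_add_smul_eq (hV : finrank K V = 4) {u : Dual K V} (hu : u ≠ 0)
    {p q r : V} (li : LinearIndependent K ![p, q]) (hr : r ∉ Submodule.span K {p, q})
    (hup : u p = 0) (huq : u q = 0) (hur : u r = 0) {x : V} (hx : u x = 0) :
    ∃ a b c : K, a • r + b • p + c • q = x := by
  have li' : LinearIndependent K ![r, p, q] :=
    linearIndependent_finCons.2 ⟨li, by rwa [Matrix.range_cons_cons_empty]⟩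
  obtain ⟨c, hc⟩ := exists_sum_smul_eq_of_apply_eq_zero hV hu li'
    (by simp [Fin.forall_fin_succ, hup, huq, hur]) hx
  exact ⟨c 0, c 1, c 2, by simpa [Fin.sum_univ_three] using hc⟩

end LinearAlgebra

section Slices

variable {V : Type*} [AddCommGroup V] [Module (ZMod 3) V]

lemma add_self_eq_neg (v : V) : v + v = -v := by
  have three : 3 • v = 0 := ZModModule.char_nsmul_eq_zero 3 v
  rw [← sub_eq_zero, ← three]
  abel

lemma neg_eq_self_iff {v : V} : -v = v ↔ v = 0 := by
  rw [neg_eq_iff_add_eq_zero, add_self_eq_neg, neg_eq_zero]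

lemma eq_zero_or_one_or_two (c : ZMod 3) : c = 0 ∨ c = 1 ∨ c = 2 := by
  decide +revert

lemma eq_of_add_add_eq_zero {S : Set V} (cap : ThreeAPFree S) {x y z : V} (hx : x ∈ S)
    (hy : y ∈ S) (hz : z ∈ S) (h : x + y + z = 0) : x = y ∧ y = z := by
  constructor
  · refine cap hx hy hz ?_
    rw [add_self_eq_neg, eq_neg_iff_add_eq_zero, ← h]
    abel
  · refine cap hy hz hx ?_
    rw [add_self_eq_neg, eq_neg_iff_add_eq_zero, ← h]
    abel

/-- The number of points of `S` on the hyperplane `f = c`. -/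
def sliceCard (S : Finset V) (f : Dual (ZMod 3) V) (c : ZMod 3) : ℕ := #{x ∈ S | f x = c}

lemma sum_comp_eq_sliceCard {M : Type*} [AddCommMonoid M] (S : Finset V) (f : Dual (ZMod 3) V)
    (F : ZMod 3 → M) :
    ∑ x ∈ S, F (f x) =
      sliceCard S f 0 • F 0 + sliceCard S f 1 • F 1 + sliceCard S f 2 • F 2 := by
  have fiber (c : ZMod 3) : ∑ x ∈ S with f x = c, F (f x) = sliceCard S f c • F c := by
    rw [sliceCard, ← sum_const]
    exact sum_congr rfl fun x hx => by rw [(mem_filter.1 hx).2]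
  rw [← sum_fiberwise S f, ← fiber, ← fiber, ← fiber]
  exact Fin.sum_univ_three _

lemma sliceCard_add_add (S : Finset V) (f : Dual (ZMod 3) V) :
    sliceCard S f 0 + sliceCard S f 1 + sliceCard S f 2 = #S := by
  simpa using (sum_comp_eq_sliceCard S f fun _ => (1 : ℕ)).symm

lemma card_filter_sub_apply_eq_zero (S : Finset V) (f : Dual (ZMod 3) V) :
    #{p ∈ S ×ˢ S | f (p.1 - p.2) = 0} =
      sliceCard S f 0 ^ 2 + sliceCard S f 1 ^ 2 + sliceCard S f 2 ^ 2 := by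
  calc #{p ∈ S ×ˢ S | f (p.1 - p.2) = 0}
      = ∑ x ∈ S, #{y ∈ S | f (x - y) = 0} := by simp only [card_filter, sum_product]
    _ = ∑ x ∈ S, sliceCard S f (f x) := by
        refine sum_congr rfl fun x _ => congrArg card (filter_congr fun y _ => ?_)
        rw [map_sub, sub_eq_zero, eq_comm]
    _ = _ := by rw [sum_comp_eq_sliceCard S f (sliceCard S f)]; simp only [smul_eq_mul]; ring

lemma card_filter_add_apply_eq_zero (S : Finset V) (f : Dual (ZMod 3) V) :
    #{p ∈ S ×ˢ S | f (p.1 + p.2) = 0} =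
      sliceCard S f 0 ^ 2 + 2 * (sliceCard S f 1 * sliceCard S f 2) := by
  calc #{p ∈ S ×ˢ S | f (p.1 + p.2) = 0}
      = ∑ x ∈ S, #{y ∈ S | f (x + y) = 0} := by simp only [card_filter, sum_product]
    _ = ∑ x ∈ S, sliceCard S f (-f x) := by
        refine sum_congr rfl fun x _ => congrArg card (filter_congr fun y _ => ?_)
        rw [map_add, eq_neg_iff_add_eq_zero, add_comm]
    _ = sliceCard S f 0 * sliceCard S f 0 + sliceCard S f 1 * sliceCard S f 2 +
          sliceCard S f 2 * sliceCard S f 1 :=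
        sum_comp_eq_sliceCard S f fun c => sliceCard S f (-c)
    _ = _ := by ring

lemma card_filter_add_add_apply_eq_zero (S : Finset V) (f : Dual (ZMod 3) V) :
    #{p ∈ S ×ˢ S ×ˢ S | f (p.1 + p.2.1 + p.2.2) = 0} =
      sliceCard S f 0 ^ 3 + sliceCard S f 1 ^ 3 + sliceCard S f 2 ^ 3 +
        6 * (sliceCard S f 0 * sliceCard S f 1 * sliceCard S f 2) := by
  let N := sliceCard S f
  calc #{p ∈ S ×ˢ S ×ˢ S | f (p.1 + p.2.1 + p.2.2) = 0}
      = ∑ x ∈ S, ∑ y ∈ S, #{z ∈ S | f (x + y + z) = 0} := by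
        simp only [card_filter, sum_product]
    _ = ∑ x ∈ S, ∑ y ∈ S, N (-f x - f y) := by
        refine sum_congr rfl fun x _ => sum_congr rfl fun y _ =>
          congrArg card (filter_congr fun z _ => ?_)
        simp only [map_add]
        constructor <;> intro h <;> linear_combination h
    _ = ∑ x ∈ S, (N 0 * N (-f x - 0) + N 1 * N (-f x - 1) + N 2 * N (-f x - 2)) :=
        sum_congr rfl fun x _ => sum_comp_eq_sliceCard S f fun c => N (-f x - c)
    _ = N 0 * (N 0 * N 0 + N 1 * N 2 + N 2 * N 1) + N 1 * (N 0 * N 2 + N 1 * N 1 + N 2 * N 0) +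
          N 2 * (N 0 * N 1 + N 1 * N 0 + N 2 * N 2) :=
        sum_comp_eq_sliceCard S f fun c => N 0 * N (-c - 0) + N 1 * N (-c - 1) + N 2 * N (-c - 2)
    _ = _ := by ring

lemma apply_sum_eq_zero_iff (S : Finset V) (f : Dual (ZMod 3) V) :
    f (∑ x ∈ S, x) = 0 ↔ sliceCard S f 1 ≡ sliceCard S f 2 [MOD 3] := by
  have values : f (∑ x ∈ S, x) = sliceCard S f 1 + 2 * sliceCard S f 2 := by
    rw [map_sum]
    exact (sum_comp_eq_sliceCard S f id).trans (by simp [mul_comm])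
  rw [values, ← ZMod.natCast_eq_natCast_iff]
  have neg_two : (2 : ZMod 3) = -1 := rfl
  rw [neg_two, neg_one_mul, ← sub_eq_add_neg, sub_eq_zero]

lemma sliceCard_neg_apply {S : Finset V} (neg_mem : ∀ x ∈ S, -x ∈ S) (f : Dual (ZMod 3) V)
    (c : ZMod 3) : sliceCard S f (-c) = sliceCard S f c := by
  refine card_bij' (fun x _ => -x) (fun x _ => -x) ?_ ?_ (by simp) (by simp) <;>
  · intro x hx
    simp_all

/-- The points of `S` in the flat `x₀ + W`, as points of `W`. -/
noncomputable def flatSection (S : Finset V) (x₀ : V) (W : Submodule (ZMod 3) V) : Finset W :=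
  S.preimage (fun w : W => x₀ + w) fun _ _ _ _ h => Subtype.ext (add_left_cancel h)

lemma mem_flatSection {S : Finset V} {x₀ : V} {W : Submodule (ZMod 3) V} {w : W} :
    w ∈ flatSection S x₀ W ↔ x₀ + w ∈ S :=
  mem_preimage

lemma threeAPFree_flatSection {S : Finset V} (cap : ThreeAPFree (S : Set V)) (x₀ : V)
    (W : Submodule (ZMod 3) V) : ThreeAPFree (flatSection S x₀ W : Set W) := by
  intro a ha b hb c hc hac
  simp only [mem_coe, mem_flatSection] at ha hb hc
  refine Subtype.ext (add_left_cancel (cap ha hb hc ?_))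
  rw [add_add_add_comm, add_add_add_comm x₀ (b : V), ← Submodule.coe_add, hac, Submodule.coe_add]

lemma map_flatSection_ker (S : Finset V) (x₀ : V) (f : Dual (ZMod 3) V) :
    (flatSection S x₀ (LinearMap.ker f)).map
      ((Function.Embedding.subtype _).trans (addLeftEmbedding x₀)) = {x ∈ S | f x = f x₀} := by
  ext x
  simp only [mem_map, mem_flatSection, mem_filter, Function.Embedding.trans_apply,
    Function.Embedding.subtype_apply, addLeftEmbedding_apply]
  constructor
  · rintro ⟨w, hw, rfl⟩
    exact ⟨hw, by simp⟩
  · rintro ⟨hx, hfx⟩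
    exact ⟨⟨x - x₀, by simp [hfx]⟩, by simpa using hx, by simp⟩

lemma card_flatSection_ker (S : Finset V) (x₀ : V) (f : Dual (ZMod 3) V) :
    #(flatSection S x₀ (LinearMap.ker f)) = sliceCard S f (f x₀) := by
  rw [sliceCard, ← map_flatSection_ker, card_map]

/-- `S` consists of the twenty nonzero vectors spanning the points of an ovoid of `PG(3,3)`,
that is, of a set of ten points of the projective space of `V` no three of which are collinear. -/
structure IsOvoid (S : Finset V) : Prop where
  finrank_eq : finrank (ZMod 3) V = 4
  threeAPFree : ThreeAPFree (S : Set V)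
  card_eq : #S = 20
  neg_mem : ∀ x ∈ S, -x ∈ S

namespace IsOvoid

variable {S : Finset V}

lemma zero_notMem (hS : IsOvoid S) : 0 ∉ S := by
  intro zero_mem
  obtain ⟨x, hx, hx0⟩ := exists_mem_ne (show 1 < #S by rw [hS.card_eq]; decide) 0
  exact hx0 (hS.threeAPFree hx zero_mem (hS.neg_mem x hx) (by simp))

lemma smul_mem (hS : IsOvoid S) {x : V} (hx : x ∈ S) {a : ZMod 3} (ha : a ≠ 0) : a • x ∈ S := by
  rcases eq_zero_or_one_or_two a with rfl | rfl | rfl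
  · exact absurd rfl ha
  · rwa [one_smul]
  · rw [two_smul, add_self_eq_neg]
    exact hS.neg_mem x hx

lemma add_notMem (hS : IsOvoid S) {x y : V} (hx : x ∈ S) (hy : y ∈ S) (hxy : x ≠ y) :
    x + y ∉ S := fun h =>
  hxy (eq_of_add_add_eq_zero hS.threeAPFree hx hy (hS.neg_mem _ h) (add_neg_cancel _)).1

lemma sum_eq_zero (hS : IsOvoid S) : ∑ x ∈ S, x = 0 :=
  sum_involution (fun x _ => -x) (fun x _ => add_neg_cancel x)
    (fun _ _ hx => mt neg_eq_self_iff.1 hx) hS.neg_mem fun x _ => neg_neg x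

lemma sliceCard_one_eq_two (hS : IsOvoid S) (f : Dual (ZMod 3) V) :
    sliceCard S f 1 = sliceCard S f 2 :=
  (sliceCard_neg_apply hS.neg_mem f 1).symm

lemma linearIndependent_pair_iff (hS : IsOvoid S) {x y : V} (hx : x ∈ S) (hy : y ∈ S) :
    LinearIndependent (ZMod 3) ![x, y] ↔ y ≠ x ∧ y ≠ -x := by
  have ne_zero {z : V} (hz : z ∈ S) : z ≠ 0 := ne_of_mem_of_not_mem hz hS.zero_notMem
  rw [LinearIndependent.pair_iff' (ne_zero hx)]
  constructor
  · intro h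
    exact ⟨fun e => h 1 (by rw [one_smul, e]), fun e => h (-1) (by rw [neg_one_smul, e])⟩
  · rintro ⟨ne, ne_neg⟩ a rfl
    rcases eq_zero_or_one_or_two a with rfl | rfl | rfl
    · exact ne_zero hy (zero_smul _ x)
    · exact ne (one_smul _ x)
    · exact ne_neg (by rw [two_smul, add_self_eq_neg])

lemma notMem_span_pair (hS : IsOvoid S) {x y z : V} (hx : x ∈ S) (hy : y ∈ S) (hz : z ∈ S)
    (hxy : LinearIndependent (ZMod 3) ![x, y]) (hxz : LinearIndependent (ZMod 3) ![x, z])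
    (hyz : LinearIndependent (ZMod 3) ![y, z]) : z ∉ Submodule.span (ZMod 3) {x, y} := by
  rw [Submodule.mem_span_pair]
  rintro ⟨a, b, rfl⟩
  rw [LinearIndependent.pair_iff] at hxy hxz hyz
  rcases eq_or_ne a 0 with rfl | ha
  · simpa using hyz (-b) 1 (by module)
  rcases eq_or_ne b 0 with rfl | hb
  · simpa using hxz (-a) 1 (by module)
  · refine hS.add_notMem (hS.smul_mem hx ha) (hS.smul_mem hy hb) (fun h => ha ?_) hz
    exact (hxy a (-b) (by rw [neg_smul, h, add_neg_cancel])).1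

lemma exists_mem_linearIndependent_pair (hS : IsOvoid S) {u : Dual (ZMod 3) V}
    (hu : sliceCard S u 0 = 8) {T : Finset V} (hTS : T ⊆ S) (hT : #T ≤ 3) :
    ∃ s ∈ S, u s = 0 ∧ ∀ t ∈ T, LinearIndependent (ZMod 3) ![t, s] := by
  classical
  have card_lt : #(T ∪ T.image (-·)) < #{x ∈ S | u x = 0} := by
    rw [← sliceCard, hu]
    have := card_union_le T (T.image (-·))
    have := card_image_le (s := T) (f := (-·))
    lia
  obtain ⟨s, hs, hsT⟩ := exists_mem_notMem_of_card_lt_card card_lt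
  rw [mem_filter] at hs
  refine ⟨s, hs.1, hs.2, fun t ht => (hS.linearIndependent_pair_iff (hTS ht) hs.1).2 ⟨?_, ?_⟩⟩
  · rintro rfl
    exact hsT (mem_union_left _ ht)
  · rintro rfl
    exact hsT (mem_union_right _ (mem_image_of_mem _ ht))

end IsOvoid

/-- `B` is a nonzero symmetric bilinear form for which all vectors of `S` are isotropic: it
exhibits an ovoid `S` as an elliptic quadric. -/
structure IsQuadricForm (S : Finset V) (B : LinearMap.BilinForm (ZMod 3) V) : Prop where
  ne_zero : B ≠ 0
  apply_comm : ∀ x y, B x y = B y x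
  apply_self : ∀ x ∈ S, B x x = 0

lemma IsQuadricForm.smul {S : Finset V} {B : LinearMap.BilinForm (ZMod 3) V}
    (hB : IsQuadricForm S B) {c : ZMod 3} (hc : c ≠ 0) : IsQuadricForm S (c • B) where
  ne_zero := smul_ne_zero hc hB.ne_zero
  apply_comm x y := congrArg (c * ·) (hB.apply_comm x y)
  apply_self x hx := by simp [hB.apply_self x hx]

end Slices

-- The coefficients come from the dual of the linear program minimising the number of functionals
-- with a two-point kernel section.
lemma moment_bound {a b c : ℕ} (ha : a ≤ 9) (hb : b ≤ 9) (hc : c ≤ 9) (total : a + b + c = 20)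
    (congr : b ≡ c [MOD 3]) :
    6064 + 12 * a + 3 * (a ^ 2 + 2 * (b * c)) ≤
      9 * (a ^ 2 + b ^ 2 + c ^ 2) + 2 * (a ^ 3 + b ^ 3 + c ^ 3 + 6 * (a * b * c)) +
        216 * if a = 2 then 1 else 0 := by
  have numeric : ∀ a < 10, ∀ b < 10, ∀ c < 10, a + b + c = 20 → b ≡ c [MOD 3] →
      6064 + 12 * a + 3 * (a ^ 2 + 2 * (b * c)) ≤
        9 * (a ^ 2 + b ^ 2 + c ^ 2) + 2 * (a ^ 3 + b ^ 3 + c ^ 3 + 6 * (a * b * c)) +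
          216 * if a = 2 then 1 else 0 := by decide +kernel
  exact numeric a (by lia) b (by lia) c (by lia) total congr

section Moments

open scoped Classical

variable {V ι : Type*} [AddCommGroup V] [Module (ZMod 3) V] [Finite V]

noncomputable local instance : Fintype (Dual (ZMod 3) V) :=
  have := DFunLike.finite (Dual (ZMod 3) V)
  Fintype.ofFinite _

lemma card_dual : Fintype.card (Dual (ZMod 3) V) = 3 ^ finrank (ZMod 3) V := by
  rw [card_eq_pow_finrank (K := ZMod 3), ZMod.card, Subspace.dual_finrank_eq]

lemma three_mul_card_dual_apply_eq_zero {w : V} (hw : w ≠ 0) :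
    3 * #{f : Dual (ZMod 3) V | f w = 0} = 3 ^ finrank (ZMod 3) V := by
  have eval_ne_zero : Dual.eval (ZMod 3) V w ≠ 0 :=
    mt (fun h => (forall_dual_apply_eq_zero_iff (ZMod 3) w).1 fun f => LinearMap.congr_fun h f) hw
  have card_ker : #{f : Dual (ZMod 3) V | f w = 0} =
      3 ^ finrank (ZMod 3) (LinearMap.ker (Dual.eval (ZMod 3) V w)) := by
    have := natCard_eq_pow_finrank (K := ZMod 3) (V := LinearMap.ker (Dual.eval (ZMod 3) V w))
    rw [Nat.card_zmod] at this
    rw [← this, ← Fintype.card_subtype, ← Nat.card_eq_fintype_card]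
    rfl
  rw [card_ker, ← pow_succ', Dual.finrank_ker_add_one_of_ne_zero eval_ne_zero,
    Subspace.dual_finrank_eq]

lemma three_mul_sum_card_filter_apply_eq_zero (s : Finset ι) (g : ι → V) :
    3 * ∑ f : Dual (ZMod 3) V with f ≠ 0, #{i ∈ s | f (g i) = 0} + 3 * #s =
      3 ^ finrank (ZMod 3) V * (#s + 2 * #{i ∈ s | g i = 0}) := by
  have point (i : ι) : 3 * #{f : Dual (ZMod 3) V | f (g i) = 0} =
      3 ^ finrank (ZMod 3) V * (1 + 2 * if g i = 0 then 1 else 0) := by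
    split_ifs with hi
    · simp [hi, card_dual, mul_comm]
    · rw [three_mul_card_dual_apply_eq_zero hi, mul_zero, add_zero, mul_one]
  have zero_term : ∑ f : Dual (ZMod 3) V with ¬ f ≠ 0, #{i ∈ s | f (g i) = 0} = #s := by
    simp only [not_not, sum_filter, sum_ite_eq', mem_univ, if_true, LinearMap.zero_apply,
      filter_true]
  calc 3 * ∑ f : Dual (ZMod 3) V with f ≠ 0, #{i ∈ s | f (g i) = 0} + 3 * #s
      = 3 * ∑ f : Dual (ZMod 3) V, #{i ∈ s | f (g i) = 0} := by
        rw [← sum_filter_add_sum_filter_not univ (· ≠ 0), zero_term, mul_add]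
    _ = ∑ i ∈ s, 3 * #{f : Dual (ZMod 3) V | f (g i) = 0} := by
        rw [← mul_sum]
        exact congrArg _ (sum_card_bipartiteAbove_eq_sum_card_bipartiteBelow _)
    _ = _ := by
        rw [sum_congr rfl fun i _ => point i, ← mul_sum, sum_add_distrib, ← mul_sum,
          ← card_eq_sum_ones, card_filter]

lemma card_dual_ne_zero : #{f : Dual (ZMod 3) V | f ≠ 0} = 3 ^ finrank (ZMod 3) V - 1 := by
  rw [filter_ne' univ (0 : Dual (ZMod 3) V), card_erase_of_mem (mem_univ _), card_univ, card_dual]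

lemma sum_sliceCard_zero (S : Finset V) :
    3 * ∑ f : Dual (ZMod 3) V with f ≠ 0, sliceCard S f 0 + 3 * #S =
      3 ^ finrank (ZMod 3) V * (#S + 2 * #{x ∈ S | x = 0}) :=
  three_mul_sum_card_filter_apply_eq_zero S id

lemma sum_sliceCard_sub (S : Finset V) :
    3 * ∑ f : Dual (ZMod 3) V with f ≠ 0,
        (sliceCard S f 0 ^ 2 + sliceCard S f 1 ^ 2 + sliceCard S f 2 ^ 2) + 3 * #S ^ 2 =
      3 ^ finrank (ZMod 3) V * (#S ^ 2 + 2 * #S) := by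
  have diagonal : #{p ∈ S ×ˢ S | p.1 - p.2 = 0} = #S := by
    rw [← diag_card S]
    congr 1
    ext p
    simp +contextual [sub_eq_zero]
  have double_count := three_mul_sum_card_filter_apply_eq_zero (S ×ˢ S) fun p => p.1 - p.2
  simpa only [card_filter_sub_apply_eq_zero, diagonal, card_product, ← sq] using double_count

lemma sum_sliceCard_add (S : Finset V) :
    3 * ∑ f : Dual (ZMod 3) V with f ≠ 0,
        (sliceCard S f 0 ^ 2 + 2 * (sliceCard S f 1 * sliceCard S f 2)) + 3 * #S ^ 2 =
      3 ^ finrank (ZMod 3) V * (#S ^ 2 + 2 * #{x ∈ S | -x ∈ S}) := by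
  have antidiagonal : #{p ∈ S ×ˢ S | p.1 + p.2 = 0} = #{x ∈ S | -x ∈ S} := by
    refine card_nbij' Prod.fst (fun x => (x, -x)) ?_ ?_ ?_ ?_ <;>
      simp +contextual [Set.MapsTo, Set.LeftInvOn, Set.RightInvOn, add_eq_zero_iff_neg_eq]
  have double_count := three_mul_sum_card_filter_apply_eq_zero (S ×ˢ S) fun p => p.1 + p.2
  simpa only [card_filter_add_apply_eq_zero, antidiagonal, card_product, ← sq] using double_count

lemma sum_sliceCard_add_add {S : Finset V} (cap : ThreeAPFree (S : Set V)) :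
    3 * ∑ f : Dual (ZMod 3) V with f ≠ 0,
        (sliceCard S f 0 ^ 3 + sliceCard S f 1 ^ 3 + sliceCard S f 2 ^ 3 +
          6 * (sliceCard S f 0 * sliceCard S f 1 * sliceCard S f 2)) + 3 * #S ^ 3 =
      3 ^ finrank (ZMod 3) V * (#S ^ 3 + 2 * #S) := by
  have diagonal : #{p ∈ S ×ˢ S ×ˢ S | p.1 + p.2.1 + p.2.2 = 0} = #S := by
    refine card_nbij' Prod.fst (fun x => (x, x, x)) ?_ ?_ ?_ (fun _ _ => rfl)
    · simp +contextual [Set.MapsTo]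
    · simp +contextual [Set.MapsTo, add_self_eq_neg]
    · rintro ⟨x, y, z⟩ hp
      obtain ⟨⟨hx, hy, hz⟩, hxyz⟩ : (x ∈ S ∧ y ∈ S ∧ z ∈ S) ∧ x + y + z = 0 := by simpa using hp
      obtain ⟨rfl, rfl⟩ := eq_of_add_add_eq_zero cap hx hy hz hxyz
      rfl
  have double_count := three_mul_sum_card_filter_apply_eq_zero (S ×ˢ S ×ˢ S)
    fun p => p.1 + p.2.1 + p.2.2
  have cube : #S * (#S * #S) = #S ^ 3 := by ring
  simpa only [card_filter_add_add_apply_eq_zero, diagonal, card_product, cube] using double_count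

lemma sum_sq_add_le {a b c k : ℕ} (ha : a ≤ k) (hb : b ≤ k) (hc : c ≤ k) :
    a ^ 2 + b ^ 2 + c ^ 2 + 4 * k * (a + b + c) ≤ (a + b + c) ^ 2 + 6 * k ^ 2 := by
  zify at *
  nlinarith [mul_nonneg (sub_nonneg.2 ha) (sub_nonneg.2 hb),
    mul_nonneg (sub_nonneg.2 hb) (sub_nonneg.2 hc), mul_nonneg (sub_nonneg.2 ha) (sub_nonneg.2 hc)]

lemma card_sq_add_le_of_sliceCard_le {S : Finset V} {k : ℕ}
    (slice_le : ∀ f : Dual (ZMod 3) V, f ≠ 0 → ∀ c, sliceCard S f c ≤ k) :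
    3 ^ finrank (ZMod 3) V * (#S ^ 2 + 2 * #S) + 3 * (3 ^ finrank (ZMod 3) V - 1) * (4 * k * #S) ≤
      3 * (3 ^ finrank (ZMod 3) V - 1) * (#S ^ 2 + 6 * k ^ 2) + 3 * #S ^ 2 := by
  have bound := sum_le_sum fun f (hf : f ∈ ({f | f ≠ 0} : Finset (Dual (ZMod 3) V))) =>
    sum_sq_add_le (slice_le f (mem_filter.1 hf).2 0) (slice_le f (mem_filter.1 hf).2 1)
      (slice_le f (mem_filter.1 hf).2 2)
  simp only [sliceCard_add_add, sum_add_distrib (g := fun _ => 4 * k * #S), sum_const,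
    card_dual_ne_zero, smul_eq_mul] at bound
  linarith [sum_sliceCard_sub S]

lemma card_le_two {S : Finset V} (hV : finrank (ZMod 3) V = 1) (cap : ThreeAPFree (S : Set V)) :
    #S ≤ 2 := by
  by_contra! three_le
  obtain ⟨D, hDS, hD⟩ := exists_subset_card_eq three_le
  have moment := sum_sliceCard_add_add (cap.mono (coe_subset.2 hDS))
  have bound (f : Dual (ZMod 3) V) : 9 ≤ sliceCard D f 0 ^ 3 + sliceCard D f 1 ^ 3 +
      sliceCard D f 2 ^ 3 + 6 * (sliceCard D f 0 * sliceCard D f 1 * sliceCard D f 2) := by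
    have total := sliceCard_add_add D f
    have numeric : ∀ a < 4, ∀ b < 4, ∀ c < 4, a + b + c = 3 →
        9 ≤ a ^ 3 + b ^ 3 + c ^ 3 + 6 * (a * b * c) := by decide
    exact numeric _ (by lia) _ (by lia) _ (by lia) (by lia)
  have := card_nsmul_le_sum {f : Dual (ZMod 3) V | f ≠ 0} _ 9 fun f _ => bound f
  rw [card_dual_ne_zero] at this
  simp only [hV, hD, smul_eq_mul] at moment this
  lia

lemma sliceCard_le_two {S : Finset V} (hV : finrank (ZMod 3) V = 2)
    (cap : ThreeAPFree (S : Set V)) {f : Dual (ZMod 3) V} (hf : f ≠ 0) (c : ZMod 3) :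
    sliceCard S f c ≤ 2 := by
  obtain ⟨x₀, rfl⟩ := LinearMap.surjective hf c
  rw [← card_flatSection_ker]
  exact card_le_two (finrank_ker_eq hV hf) (threeAPFree_flatSection cap _ _)

lemma card_le_four {S : Finset V} (hV : finrank (ZMod 3) V = 2) (cap : ThreeAPFree (S : Set V)) :
    #S ≤ 4 := by
  by_contra! five_le
  obtain ⟨D, hDS, hD⟩ := exists_subset_card_eq five_le
  have := card_sq_add_le_of_sliceCard_le fun f (hf : f ≠ 0) =>
    sliceCard_le_two hV (cap.mono (coe_subset.2 hDS)) hf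
  simp [hV, hD] at this

lemma sliceCard_le_four {S : Finset V} (hV : finrank (ZMod 3) V = 3)
    (cap : ThreeAPFree (S : Set V)) {f : Dual (ZMod 3) V} (hf : f ≠ 0) (c : ZMod 3) :
    sliceCard S f c ≤ 4 := by
  obtain ⟨x₀, rfl⟩ := LinearMap.surjective hf c
  rw [← card_flatSection_ker]
  exact card_le_four (finrank_ker_eq hV hf) (threeAPFree_flatSection cap _ _)

lemma card_le_nine {S : Finset V} (hV : finrank (ZMod 3) V = 3) (cap : ThreeAPFree (S : Set V)) :
    #S ≤ 9 := by
  by_contra! ten_le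
  obtain ⟨D, hDS, hD⟩ := exists_subset_card_eq ten_le
  have := card_sq_add_le_of_sliceCard_le fun f (hf : f ≠ 0) =>
    sliceCard_le_four hV (cap.mono (coe_subset.2 hDS)) hf
  simp [hV, hD] at this

lemma sliceCard_le_nine {S : Finset V} (hV : finrank (ZMod 3) V = 4)
    (cap : ThreeAPFree (S : Set V)) {f : Dual (ZMod 3) V} (hf : f ≠ 0) (c : ZMod 3) :
    sliceCard S f c ≤ 9 := by
  obtain ⟨x₀, rfl⟩ := LinearMap.surjective hf c
  rw [← card_flatSection_ker]
  exact card_le_nine (finrank_ker_eq hV hf) (threeAPFree_flatSection cap _ _)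

lemma sum_eq_zero_of_card_eq_nine {S : Finset V} (hV : finrank (ZMod 3) V = 3)
    (cap : ThreeAPFree (S : Set V)) (hS : #S = 9) : ∑ x ∈ S, x = 0 := by
  let weight (f : Dual (ZMod 3) V) : ℕ :=
    sliceCard S f 0 ^ 3 + sliceCard S f 1 ^ 3 + sliceCard S f 2 ^ 3 +
        6 * (sliceCard S f 0 * sliceCard S f 1 * sliceCard S f 2) +
      3 * (sliceCard S f 0 ^ 2 + sliceCard S f 1 ^ 2 + sliceCard S f 2 ^ 2)
  have bound (f : Dual (ZMod 3) V) (hf : f ≠ 0) :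
      324 ≤ weight f ∧ (324 = weight f → sliceCard S f 1 ≡ sliceCard S f 2 [MOD 3]) := by
    have numeric : ∀ a < 5, ∀ b < 5, ∀ c < 5, a + b + c = 9 →
        324 ≤ a ^ 3 + b ^ 3 + c ^ 3 + 6 * (a * b * c) + 3 * (a ^ 2 + b ^ 2 + c ^ 2) ∧
        (324 = a ^ 3 + b ^ 3 + c ^ 3 + 6 * (a * b * c) + 3 * (a ^ 2 + b ^ 2 + c ^ 2) →
          b ≡ c [MOD 3]) := by decide
    have slice_lt (c : ZMod 3) : sliceCard S f c < 5 :=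
      Nat.lt_succ_of_le (sliceCard_le_four hV cap hf c)
    exact numeric _ (slice_lt 0) _ (slice_lt 1) _ (slice_lt 2) ((sliceCard_add_add S f).trans hS)
  have total : ∑ f : Dual (ZMod 3) V with f ≠ 0, 324 = ∑ f with f ≠ 0, weight f := by
    have square := sum_sliceCard_sub S
    have cube := sum_sliceCard_add_add cap
    simp only [weight, sum_const, card_dual_ne_zero, hV, hS, smul_eq_mul] at square cube ⊢
    rw [sum_add_distrib, ← mul_sum]
    lia
  have equality := (sum_eq_sum_iff_of_le fun f hf => (bound f (mem_filter.1 hf).2).1).1 total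
  refine (forall_dual_apply_eq_zero_iff (ZMod 3) _).1 fun f => ?_
  rcases eq_or_ne f 0 with rfl | hf
  · rfl
  · exact (apply_sum_eq_zero_iff S f).2 ((bound f hf).2 (equality f (by simpa using hf)))

lemma sum_slice_eq_zero {S : Finset V} (hV : finrank (ZMod 3) V = 4)
    (cap : ThreeAPFree (S : Set V)) {f : Dual (ZMod 3) V} (hf : f ≠ 0) {c : ZMod 3}
    (hc : sliceCard S f c = 9) : ∑ x ∈ S with f x = c, x = 0 := by
  obtain ⟨x₀, rfl⟩ := LinearMap.surjective hf c
  have card_section := (card_flatSection_ker S x₀ f).trans hc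
  have sum_section := sum_eq_zero_of_card_eq_nine (finrank_ker_eq hV hf)
    (threeAPFree_flatSection cap x₀ _) card_section
  have nine_nsmul : 9 • x₀ = 0 := by
    rw [show 9 = 3 * 3 from rfl, mul_nsmul, ZModModule.char_nsmul_eq_zero 3 (3 • x₀)]
  calc ∑ x ∈ S with f x = f x₀, x
      = ∑ w ∈ flatSection S x₀ (LinearMap.ker f), (x₀ + (w : V)) := by
        rw [← map_flatSection_ker, sum_map]
        rfl
    _ = 9 • x₀ + ((∑ w ∈ flatSection S x₀ (LinearMap.ker f), w : LinearMap.ker f) : V) := by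
        rw [sum_add_distrib, sum_const, card_section, Submodule.coe_sum]
    _ = 0 := by rw [nine_nsmul, sum_section, Submodule.coe_zero, add_zero]

lemma exists_mem_slice_apply_eq {S : Finset V} (hV : finrank (ZMod 3) V = 4)
    (cap : ThreeAPFree (S : Set V)) {f g : Dual (ZMod 3) V} (hf : f ≠ 0) {c : ZMod 3}
    (hc : sliceCard S f c = 9) (hfg : ¬ LinearMap.ker f ≤ LinearMap.ker g) (d : ZMod 3) :
    ∃ x ∈ S, f x = c ∧ g x = d := by
  obtain ⟨x₀, rfl⟩ := LinearMap.surjective hf c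
  let E := flatSection S x₀ (LinearMap.ker f)
  let h : Dual (ZMod 3) (LinearMap.ker f) := g.domRestrict (LinearMap.ker f)
  have hh : h ≠ 0 := fun h0 => hfg fun w hw => LinearMap.congr_fun h0 ⟨w, hw⟩
  have slice_le : ∀ c, sliceCard E h c ≤ 4 :=
    sliceCard_le_four (finrank_ker_eq hV hf) (threeAPFree_flatSection cap x₀ _) hh
  have pos : 0 < sliceCard E h (d - g x₀) := by
    have total : sliceCard E h 0 + sliceCard E h 1 + sliceCard E h 2 = 9 := by
      rw [sliceCard_add_add, card_flatSection_ker, hc]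
    have le_zero := slice_le 0
    have le_one := slice_le 1
    have le_two := slice_le 2
    rcases eq_zero_or_one_or_two (d - g x₀) with h | h | h <;> rw [h] <;> lia
  obtain ⟨w, hw⟩ := card_pos.1 pos
  obtain ⟨hw, hd⟩ := mem_filter.1 hw
  exact ⟨x₀ + w, mem_flatSection.1 hw, by simp, by rw [map_add, ← eq_sub_iff_add_eq']; exact hd⟩

section Symmetry

variable {S : Finset V}

lemma sliceCard_eq_nine (hV : finrank (ZMod 3) V = 4) (cap : ThreeAPFree (S : Set V))
    (hS : #S = 20) {f : Dual (ZMod 3) V} (hf : f ≠ 0) (hf₀ : sliceCard S f 0 = 2) :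
    sliceCard S f 1 = 9 ∧ sliceCard S f 2 = 9 := by
  have total := sliceCard_add_add S f
  have le_one := sliceCard_le_nine hV cap hf 1
  have le_two := sliceCard_le_nine hV cap hf 2
  lia

lemma slice_zero_eq_pair (hV : finrank (ZMod 3) V = 4) (cap : ThreeAPFree (S : Set V))
    (hS : #S = 20) (sum_zero : ∑ x ∈ S, x = 0) {f : Dual (ZMod 3) V} (hf : f ≠ 0)
    (hf₀ : sliceCard S f 0 = 2) {x : V} (hx : x ∈ S) (hfx : f x = 0) :
    {y ∈ S | f y = 0} = {x, -x} := by
  obtain ⟨nine_one, nine_two⟩ := sliceCard_eq_nine hV cap hS hf hf₀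
  obtain ⟨p, q, hpq, pair⟩ := card_eq_two.1 hf₀
  have split : ∑ x ∈ S, x =
      ∑ x ∈ S with f x = 0, x + ∑ x ∈ S with f x = 1, x + ∑ x ∈ S with f x = 2, x := by
    rw [← sum_fiberwise S f]
    exact Fin.sum_univ_three _
  rw [sum_zero, sum_slice_eq_zero hV cap hf nine_one, sum_slice_eq_zero hV cap hf nine_two,
    add_zero, add_zero, pair, sum_pair hpq] at split
  obtain rfl : q = -p := eq_neg_of_add_eq_zero_right split.symm
  have x_mem : x ∈ ({p, -p} : Finset V) := pair ▸ mem_filter.2 ⟨hx, hfx⟩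
  rcases mem_insert.1 x_mem with rfl | hx
  · exact pair
  · rw [pair, mem_singleton.1 hx, neg_neg, pair_comm]

lemma le_card_filter_sliceCard_eq_two (hV : finrank (ZMod 3) V = 4)
    (cap : ThreeAPFree (S : Set V)) (hS : #S = 20) (sum_zero : ∑ x ∈ S, x = 0) :
    60 + 9 * #{x ∈ S | -x ∈ S} ≤
      12 * #{f : Dual (ZMod 3) V | f ≠ 0 ∧ sliceCard S f 0 = 2} := by
  have bound := sum_le_sum fun f (hf : f ∈ ({f | f ≠ 0} : Finset (Dual (ZMod 3) V))) =>
    have slice_le := sliceCard_le_nine hV cap (mem_filter.1 hf).2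
    moment_bound (slice_le 0) (slice_le 1) (slice_le 2) ((sliceCard_add_add S f).trans hS)
      ((apply_sum_eq_zero_iff S f).1 (by rw [sum_zero, map_zero]))
  rw [← filter_filter, card_filter _ ({f | f ≠ 0} : Finset (Dual (ZMod 3) V))]
  simp only [sum_add_distrib, ← mul_sum, sum_const, card_dual_ne_zero, smul_eq_mul] at bound
  have zero := sum_sliceCard_zero S
  have sub := sum_sliceCard_sub S
  have add := sum_sliceCard_add S
  have cube := sum_sliceCard_add_add cap
  simp only [hV, hS, sum_add_distrib, ← mul_sum] at bound zero sub add cube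
  lia

lemma card_filter_sliceCard_eq_two_le (hV : finrank (ZMod 3) V = 4)
    (cap : ThreeAPFree (S : Set V)) (hS : #S = 20) (sum_zero : ∑ x ∈ S, x = 0) :
    #{f : Dual (ZMod 3) V | f ≠ 0 ∧ sliceCard S f 0 = 2} ≤ #{x ∈ S | -x ∈ S} := by
  have pair {f : Dual (ZMod 3) V} (hf : f ≠ 0 ∧ sliceCard S f 0 = 2) {x : V} (hx : x ∈ S)
      (hfx : f x = 0) : {y ∈ S | f y = 0} = {x, -x} :=
    slice_zero_eq_pair hV cap hS sum_zero hf.1 hf.2 hx hfx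
  refine Nat.le_of_mul_le_mul_right (card_mul_le_card_mul (fun f x => f x = 0) (m := 2) (n := 2)
    (fun f hf => ?_) fun x hx => ?_) two_pos
  · obtain ⟨-, hf⟩ := mem_filter.1 hf
    refine hf.2.symm.trans_le (card_le_card fun x hx => ?_)
    obtain ⟨hx, hfx⟩ := mem_filter.1 hx
    have neg_mem : -x ∈ ({y ∈ S | f y = 0} : Finset V) := by simp [pair hf hx hfx]
    simp [bipartiteAbove, hx, hfx, (mem_filter.1 neg_mem).1]
  · obtain ⟨hx, -⟩ := mem_filter.1 hx
    rcases (bipartiteBelow (fun f x => f x = 0) {f : Dual (ZMod 3) V | f ≠ 0 ∧ sliceCard S f 0 = 2}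
      x).eq_empty_or_nonempty with none | ⟨f, hf⟩
    · simp [none]
    refine (card_le_card (t := {f, -f}) fun g hg => ?_).trans Finset.card_le_two
    simp only [bipartiteBelow, mem_filter, mem_univ, true_and] at hf hg
    obtain ⟨c, rfl⟩ : ∃ c : ZMod 3, c • f = g := by
      refine exists_smul_eq_of_ker_le (not_not.1 fun hfg => ?_)
      obtain ⟨y, hy, hfy, hgy⟩ := exists_mem_slice_apply_eq hV cap hf.1.1
        (sliceCard_eq_nine hV cap hS hf.1.1 hf.1.2).1 hfg 0
      have y_mem : y ∈ ({x, -x} : Finset V) := pair hg.1 hx hg.2 ▸ mem_filter.2 ⟨hy, hgy⟩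
      rw [← pair hf.1 hx hf.2, mem_filter, hfy] at y_mem
      exact one_ne_zero y_mem.2
    rcases eq_zero_or_one_or_two c with rfl | rfl | rfl
    · simp at hg
    · simp
    · simp [two_smul, add_self_eq_neg]

lemma neg_mem_of_sum_eq_zero (hV : finrank (ZMod 3) V = 4) (cap : ThreeAPFree (S : Set V))
    (hS : #S = 20) (sum_zero : ∑ x ∈ S, x = 0) {x : V} (hx : x ∈ S) : -x ∈ S := by
  have lower := le_card_filter_sliceCard_eq_two hV cap hS sum_zero
  have upper := card_filter_sliceCard_eq_two_le hV cap hS sum_zero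
  have all : {x ∈ S | -x ∈ S} = S := eq_of_subset_of_card_le (filter_subset _ _) (by lia)
  rw [← all] at hx
  exact (mem_filter.1 hx).2

lemma sum_sub_mem (hV : finrank (ZMod 3) V = 4) (cap : ThreeAPFree (S : Set V))
    (hS : #S = 20) {x : V} (hx : x ∈ S) : ∑ y ∈ S, y - x ∈ S := by
  let t := ∑ y ∈ S, y
  let S' := S.map (addLeftEmbedding t)
  have card_image : #S' = 20 := (card_map _).trans hS
  have cap_image : ThreeAPFree (S' : Set V) := by
    rw [coe_map]
    exact cap.vadd_set
  have sum_image : ∑ y ∈ S', y = 0 := by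
    have twenty_one : 21 • t = 0 := by
      rw [show 21 = 3 * 7 from rfl, mul_nsmul, ZModModule.char_nsmul_eq_zero 3 t, smul_zero]
    calc ∑ y ∈ S', y = ∑ x ∈ S, (t + x) := sum_map _ _ _
      _ = 20 • t + t := by rw [sum_add_distrib, sum_const, hS]
      _ = 0 := by rw [← succ_nsmul, twenty_one]
  have := neg_mem_of_sum_eq_zero hV cap_image card_image sum_image
    (mem_map_of_mem (addLeftEmbedding t) hx)
  obtain ⟨y, hy, hyx⟩ := mem_map.1 this
  have reflected : t + y = -(t + x) := hyx
  have : y = t - x := by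
    calc y = -(t + t) - x := by rw [eq_sub_of_add_eq' reflected]; abel
      _ = t - x := by rw [add_self_eq_neg, neg_neg]
  exact this ▸ hy

lemma card_le_twenty (hV : finrank (ZMod 3) V = 4) (cap : ThreeAPFree (S : Set V)) :
    #S ≤ 20 := by
  by_contra! lt_card
  obtain ⟨D, hDS, hD⟩ := exists_subset_card_eq (n := 21) lt_card
  replace cap := cap.mono (coe_subset.2 hDS)
  let s := ∑ x ∈ D, x
  have reflect {x y : V} (hx : x ∈ D) (hy : y ∈ D) (hxy : x ≠ y) : s - x - y ∈ D := by
    have := sum_sub_mem hV (cap.mono (coe_subset.2 (erase_subset x D)))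
      (by rw [card_erase_of_mem hx, hD]) (mem_erase.2 ⟨hxy.symm, hy⟩)
    rw [sum_erase_eq_sub hx] at this
    exact mem_of_mem_erase this
  have shift {x y z : V} (hx : x ∈ D) (hy : y ∈ D) (hz : z ∈ D) (hxy : x ≠ y)
      (hxyz : z ≠ s - x - y) : x + y - z ∈ D := by
    have := reflect (reflect hx hy hxy) hz hxyz.symm
    rwa [show s - (s - x - y) - z = x + y - z by abel] at this
  obtain ⟨x, hx, z, hz, hxz⟩ := one_lt_card.1 (show 1 < #D by lia)
  obtain ⟨y, hy, hy'⟩ : ∃ y ∈ D, y ∉ ({x, z, s - x - z, -(s + x + z)} : Finset V) :=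
    exists_mem_notMem_of_card_lt_card (Finset.card_le_four.trans_lt (by lia))
  simp only [mem_insert, mem_singleton, not_or] at hy'
  obtain ⟨hyx, hyz, hyxz, hyxz'⟩ := hy'
  have v_mem : x + y - z ∈ D := shift hx hy hz (Ne.symm hyx) fun h => hyxz (by rw [h]; abel)
  have third_mem : -x - z ∈ D := by
    have v_ne : x + y - z ≠ x := fun h => hyz (by rw [← sub_eq_zero, ← sub_eq_zero.2 h]; abel)
    have y_ne : y ≠ s - (x + y - z) - x := by
      intro h
      have double : y + y = s + z - (x + x) := by
        rw [← sub_eq_zero, ← sub_eq_zero.2 h]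
        abel
      rw [add_self_eq_neg, add_self_eq_neg, neg_eq_iff_eq_neg] at double
      exact hyxz' (by rw [double]; abel)
    have := shift v_mem hx hy v_ne y_ne
    rwa [show x + y - z + x - y = x + x - z by abel, add_self_eq_neg] at this
  exact hxz (eq_of_add_add_eq_zero cap hx hz third_mem (by abel)).1

end Symmetry

namespace IsOvoid

variable {S : Finset V}

lemma sliceCard_zero_eq_two_or_eight (hS : IsOvoid S) {f : Dual (ZMod 3) V} (hf : f ≠ 0) :
    sliceCard S f 0 = 2 ∨ sliceCard S f 0 = 8 := by
  let weight (f : Dual (ZMod 3) V) : ℕ :=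
    sliceCard S f 0 ^ 2 + sliceCard S f 1 ^ 2 + sliceCard S f 2 ^ 2 + 5 * sliceCard S f 0
  have bound (f : Dual (ZMod 3) V) (hf : f ≠ 0) :
      weight f ≤ 176 ∧ (weight f = 176 → sliceCard S f 0 = 2 ∨ sliceCard S f 0 = 8) := by
    have numeric : ∀ a < 10, ∀ b < 10, a + b + b = 20 →
        a ^ 2 + b ^ 2 + b ^ 2 + 5 * a ≤ 176 ∧
        (a ^ 2 + b ^ 2 + b ^ 2 + 5 * a = 176 → a = 2 ∨ a = 8) := by decide
    have slice_lt (c : ZMod 3) : sliceCard S f c < 10 :=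
      Nat.lt_succ_of_le (sliceCard_le_nine hS.finrank_eq hS.threeAPFree hf c)
    have total := sliceCard_add_add S f
    simp only [weight, ← hS.sliceCard_one_eq_two f, hS.card_eq] at total ⊢
    exact numeric _ (slice_lt 0) _ (slice_lt 1) total
  have total : ∑ f with f ≠ 0, weight f = ∑ f : Dual (ZMod 3) V with f ≠ 0, 176 := by
    have square := sum_sliceCard_sub S
    have zero := sum_sliceCard_zero S
    have no_zero : #{x ∈ S | x = 0} = 0 := by simpa [filter_eq'] using hS.zero_notMem
    simp only [weight, sum_const, card_dual_ne_zero, hS.finrank_eq, hS.card_eq, no_zero,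
      smul_eq_mul] at square zero ⊢
    rw [sum_add_distrib, ← mul_sum]
    lia
  have equality := (sum_eq_sum_iff_of_le fun f hf => (bound f (mem_filter.1 hf).2).1).1 total
  exact (bound f hf).2 (equality f (by simpa using hf))

lemma exists_tangent (hS : IsOvoid S) : ∃ f : Dual (ZMod 3) V, f ≠ 0 ∧ sliceCard S f 0 = 2 := by
  by_contra! none
  have eight (f : Dual (ZMod 3) V) (hf : f ∈ ({f | f ≠ 0} : Finset (Dual (ZMod 3) V))) :
      sliceCard S f 0 = 8 :=
    have hf := (mem_filter.1 hf).2
    (hS.sliceCard_zero_eq_two_or_eight hf).resolve_left (none f hf)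
  have zero := sum_sliceCard_zero S
  have no_zero : #{x ∈ S | x = 0} = 0 := by simpa [filter_eq'] using hS.zero_notMem
  rw [sum_congr rfl eight, sum_const, card_dual_ne_zero, hS.finrank_eq, hS.card_eq, no_zero] at zero
  simp at zero

lemma sum_apply_sq_eq_zero (hS : IsOvoid S) (g : Dual (ZMod 3) V) : ∑ x ∈ S, g x ^ 2 = 0 := by
  rcases eq_or_ne g 0 with rfl | hg
  · simp
  have total := sliceCard_add_add S g
  rw [sum_comp_eq_sliceCard S g (· ^ 2), ← hS.sliceCard_one_eq_two g]
  rw [← hS.sliceCard_one_eq_two g, hS.card_eq] at total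
  rcases hS.sliceCard_zero_eq_two_or_eight hg with h | h
  · rw [h, show sliceCard S g 1 = 9 by lia]
    decide
  · rw [h, show sliceCard S g 1 = 6 by lia]
    decide

lemma sum_apply_mul_apply_eq_zero (hS : IsOvoid S) (g h : Dual (ZMod 3) V) :
    ∑ x ∈ S, g x * h x = 0 := by
  have polarization (x : V) : g x * h x = g x ^ 2 + h x ^ 2 - (g + h) x ^ 2 := by
    have (a b : ZMod 3) : a * b = a ^ 2 + b ^ 2 - (a + b) ^ 2 := by decide +revert
    exact this _ _
  simp only [polarization, sum_sub_distrib, sum_add_distrib, hS.sum_apply_sq_eq_zero, add_zero,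
    sub_zero]

lemma sum_apply_self_eq_zero (hS : IsOvoid S) (B : LinearMap.BilinForm (ZMod 3) V) :
    ∑ x ∈ S, B x x = 0 := by
  let e := finBasis (ZMod 3) V
  have expand (x : V) : B x x = ∑ i, e.coord i x * B (e i) x := by
    refine (congrArg (B · x) (e.sum_repr x).symm).trans ?_
    simp only [map_sum, LinearMap.sum_apply, map_smul, LinearMap.smul_apply, smul_eq_mul,
      Basis.coord_apply]
  simp only [expand]
  rw [sum_comm]
  exact Finset.sum_eq_zero fun i _ => hS.sum_apply_mul_apply_eq_zero (e.coord i) (B (e i))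

lemma sliceCard_zero_eq_eight (hS : IsOvoid S) {u : Dual (ZMod 3) V} (hu : u ≠ 0) {p q : V}
    (hp : p ∈ S) (hq : q ∈ S) (hpq : LinearIndependent (ZMod 3) ![p, q]) (hup : u p = 0)
    (huq : u q = 0) : sliceCard S u 0 = 8 := by
  refine (hS.sliceCard_zero_eq_two_or_eight hu).resolve_left fun tangent => ?_
  have pair := slice_zero_eq_pair hS.finrank_eq hS.threeAPFree hS.card_eq hS.sum_eq_zero hu tangent
    hp hup
  have hq' : q ∈ ({p, -p} : Finset V) := pair ▸ mem_filter.2 ⟨hq, huq⟩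
  obtain ⟨ne, ne_neg⟩ := (hS.linearIndependent_pair_iff hp hq).1 hpq
  simp [ne, ne_neg] at hq'

lemma exists_smul_add_smul_add_smul_mem (hS : IsOvoid S) {u : Dual (ZMod 3) V} (hu : u ≠ 0)
    {p q : V} (hp : p ∈ S) (hq : q ∈ S) (hpq : LinearIndependent (ZMod 3) ![p, q]) (hup : u p = 0)
    (huq : u q = 0) :
    ∃ r ∈ S, u r = 0 ∧ r ∉ Submodule.span (ZMod 3) {p, q} ∧
      ∃ a b c : ZMod 3, a ≠ 0 ∧ c ≠ 0 ∧ a • r + b • p + c • q ∈ S := by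
  have eight := hS.sliceCard_zero_eq_eight hu hp hq hpq hup huq
  obtain ⟨r, hr, hur, hTr⟩ := hS.exists_mem_linearIndependent_pair eight (T := {p, q})
    (by simp [insert_subset_iff, hp, hq]) (Finset.card_le_two.trans (by decide))
  obtain ⟨s, hs, hus, hTs⟩ := hS.exists_mem_linearIndependent_pair eight (T := {p, q, r})
    (by simp [insert_subset_iff, hp, hq, hr]) card_le_three
  simp only [mem_insert, mem_singleton, forall_eq_or_imp, forall_eq] at hTr hTs
  obtain ⟨hpr, hqr⟩ := hTr
  obtain ⟨hps, hqs, hrs⟩ := hTs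
  have hr_span := hS.notMem_span_pair hp hq hr hpq hpr hqr
  obtain ⟨a, b, c, rfl⟩ :=
    exists_smul_add_smul_add_smul_eq hS.finrank_eq hu hpq hr_span hup huq hur hus
  refine ⟨r, hr, hur, hr_span, a, b, c, ?_, ?_, hs⟩ <;> rintro rfl
  · exact hS.notMem_span_pair hp hq hs hpq hps hqs (Submodule.mem_span_pair.2 ⟨b, c, by module⟩)
  · exact hS.notMem_span_pair hp hr hs hpr hps hrs (Submodule.mem_span_pair.2 ⟨b, a, by module⟩)

end IsOvoid

end Moments

section Quadric

variable {V : Type*} [AddCommGroup V] [Module (ZMod 3) V] [Finite V] {S : Finset V}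
  {B : LinearMap.BilinForm (ZMod 3) V}

-- Symmetric forms make up a ten-dimensional space, so some `B ≠ 0` vanishes on the nine points of
-- an affine slice parallel to a tangent hyperplane. One antipodal pair of `S` then remains, and
-- `∑ x ∈ S, B x x = 0` takes care of it.
lemma IsOvoid.exists_isQuadricForm (hS : IsOvoid S) : ∃ B, IsQuadricForm S B := by
  classical
  obtain ⟨f, hf, tangent⟩ := hS.exists_tangent
  have nine : #{x ∈ S | f x = 1} = 9 :=
    (sliceCard_eq_nine hS.finrank_eq hS.threeAPFree hS.card_eq hf tangent).1
  obtain ⟨B, hB, symmetric, isotropic_one⟩ :=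
    exists_symmetric_bilinForm_apply_self_eq_zero (K := ZMod 3) (T := {x ∈ S | f x = 1})
      (by rw [nine, hS.finrank_eq]; decide)
  have isotropic_of_ne {x : V} (hx : x ∈ S) (hfx : f x ≠ 0) : B x x = 0 := by
    rcases eq_zero_or_one_or_two (f x) with h | h | h
    · exact absurd h hfx
    · exact isotropic_one x (mem_filter.2 ⟨hx, h⟩)
    · have hneg : f (-x) = 1 := by rw [map_neg, h]; rfl
      simpa using isotropic_one (-x) (mem_filter.2 ⟨hS.neg_mem x hx, hneg⟩)
  refine ⟨B, hB, symmetric, fun x hx => ?_⟩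
  by_cases hfx : f x = 0
  · have total := hS.sum_apply_self_eq_zero B
    have ne_neg : x ≠ -x := fun h => hS.zero_notMem (neg_eq_self_iff.1 h.symm ▸ hx)
    rw [← sum_filter_of_ne (p := fun x => f x = 0) fun y hy => not_imp_comm.1 (isotropic_of_ne hy),
      slice_zero_eq_pair hS.finrank_eq hS.threeAPFree hS.card_eq hS.sum_eq_zero hf tangent hx hfx,
      sum_pair ne_neg, map_neg, map_neg, LinearMap.neg_apply, neg_neg, add_self_eq_neg] at total
    exact neg_eq_zero.1 total
  · exact isotropic_of_ne hx hfx

namespace IsQuadricForm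

lemma not_forall_ker_apply_eq_zero (hB : IsQuadricForm S B) (hS : IsOvoid S)
    {u : Dual (ZMod 3) V} (hu : u ≠ 0) : ¬ ∀ x y, u x = 0 → u y = 0 → B x y = 0 := by
  intro vanish
  obtain ⟨v, hv⟩ := LinearMap.surjective hu 1
  have decomposition (x y : V) : B x y = u x * B v y + u y * B v x - u x * u y * B v v := by
    have := vanish (x - u x • v) (y - u y • v) (by simp [hv]) (by simp [hv])
    simp only [map_sub, map_smul, LinearMap.sub_apply, LinearMap.smul_apply, smul_eq_mul,
      hB.apply_comm x v] at this
    linear_combination this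
  let l : Dual (ZMod 3) V := (2 : ZMod 3) • B v - B v v • u
  have factor (x : V) : B x x = u x * l x := by
    simp only [l, LinearMap.sub_apply, LinearMap.smul_apply, smul_eq_mul]
    linear_combination decomposition x x
  have hl : l ≠ 0 := by
    intro hl
    have proportional (x : V) : 2 * B v x = B v v * u x := sub_eq_zero.1 (LinearMap.congr_fun hl x)
    have hvv : B v v = 0 := by linear_combination proportional v + B v v * hv
    have hvx (x : V) : B v x = 0 := by
      linear_combination
        2 * proportional x - B v x * (by decide : (3 : ZMod 3) = 0) + 2 * u x * hvv
    exact hB.ne_zero (LinearMap.ext₂ fun x y => by simp [decomposition x y, hvx])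
  have slice_le {f : Dual (ZMod 3) V} (hf : f ≠ 0) : #{x ∈ S | f x = 0} ≤ 8 := by
    rcases hS.sliceCard_zero_eq_two_or_eight hf with h | h <;> rw [sliceCard] at h <;> lia
  have cover : {x ∈ S | ¬ u x = 0} ⊆ {x ∈ S | l x = 0} := by
    intro x hx
    obtain ⟨hx, hux⟩ := mem_filter.1 hx
    have product : u x * l x = 0 := (factor x).symm.trans (hB.apply_self x hx)
    exact mem_filter.2 ⟨hx, (mul_eq_zero.1 product).resolve_left hux⟩
  have := card_filter_add_card_filter_not (s := S) fun x => u x = 0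
  have := card_le_card cover
  have := slice_le hu
  have := slice_le hl
  have := hS.card_eq
  lia

lemma exists_ne_zero_ker_le (hB : IsQuadricForm S B) (hS : IsOvoid S) {p q : V}
    (hp : p ∈ S) (hpq : B p q = 0) :
    ∃ u : Dual (ZMod 3) V, u ≠ 0 ∧ u p = 0 ∧ u q = 0 ∧ ∀ x, u x = 0 → B p x = 0 := by
  rcases eq_or_ne (B p) 0 with hBp | hBp
  · obtain ⟨u, hu, hu₀⟩ := exists_dual_ne_zero_forall_apply_eq_zero (K := ZMod 3) (v := ![p, q])
      (by rw [hS.finrank_eq, Fintype.card_fin]; decide)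
    exact ⟨u, hu, hu₀ 0, hu₀ 1, fun x _ => by rw [hBp, LinearMap.zero_apply]⟩
  · exact ⟨B p, hBp, hB.apply_self p hp, hpq, fun _ => id⟩

lemma apply_ne_zero (hB : IsQuadricForm S B) (hS : IsOvoid S) {p q : V} (hp : p ∈ S) (hq : q ∈ S)
    (hpq : LinearIndependent (ZMod 3) ![p, q]) : B p q ≠ 0 := by
  intro orthogonal
  obtain ⟨u, hu, hup, huq, ker_le⟩ := hB.exists_ne_zero_ker_le hS hp orthogonal
  obtain ⟨r, hr, hur, hr_span, a, b, c, ha, hc, hs⟩ :=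
    hS.exists_smul_add_smul_add_smul_mem hu hp hq hpq hup huq
  have gram : B p p = 0 ∧ B q q = 0 ∧ B r r = 0 ∧ B p q = 0 ∧ B q p = 0 ∧ B p r = 0 ∧ B r p = 0 :=
    ⟨hB.apply_self p hp, hB.apply_self q hq, hB.apply_self r hr, orthogonal,
      (hB.apply_comm q p).trans orthogonal, ker_le r hur, (hB.apply_comm r p).trans (ker_le r hur)⟩
  have hrq : B r q = 0 := by
    have isotropic := hB.apply_self _ hs
    simp only [map_add, map_smul, LinearMap.add_apply, LinearMap.smul_apply, smul_eq_mul, gram,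
      hB.apply_comm q r, mul_zero, add_zero, zero_add] at isotropic
    have : a * c * B r q = 0 := by
      linear_combination 2 * isotropic - a * c * B r q * (by decide : (3 : ZMod 3) = 0)
    simpa [ha, hc] using this
  refine hB.not_forall_ker_apply_eq_zero hS hu fun x y hx hy => ?_
  obtain ⟨a, b, c, rfl⟩ :=
    exists_smul_add_smul_add_smul_eq hS.finrank_eq hu hpq hr_span hup huq hur hx
  obtain ⟨a', b', c', rfl⟩ :=
    exists_smul_add_smul_add_smul_eq hS.finrank_eq hu hpq hr_span hup huq hur hy
  simp [gram, hrq, hB.apply_comm q r]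

lemma eq_zero_of_apply_eq_zero (hB : IsQuadricForm S B) (hS : IsOvoid S) {p q z : V} (hp : p ∈ S)
    (hq : q ∈ S) (hpq : LinearIndependent (ZMod 3) ![p, q]) (hpz : B p z = 0) (hqz : B q z = 0)
    (hzz : B z z = 0) : z = 0 := by
  classical
  have hBpq := hB.apply_ne_zero hS hp hq hpq
  have gram : B p p = 0 ∧ B q q = 0 ∧ B z p = 0 ∧ B z q = 0 :=
    ⟨hB.apply_self p hp, hB.apply_self q hq, (hB.apply_comm z p).trans hpz,
      (hB.apply_comm z q).trans hqz⟩
  by_contra hz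
  have z_notMem : z ∉ Submodule.span (ZMod 3) {p, q} := by
    rw [Submodule.mem_span_pair]
    rintro ⟨a, b, rfl⟩
    have ha : a = 0 := by simpa [gram, hBpq, hB.apply_comm q p] using hqz
    have hb : b = 0 := by simpa [gram, hBpq] using hpz
    exact hz (by rw [ha, hb, zero_smul, zero_smul, add_zero])
  obtain ⟨u, hu, hu₀⟩ := exists_dual_ne_zero_forall_apply_eq_zero (K := ZMod 3) (v := ![p, q, z])
    (by rw [hS.finrank_eq, Fintype.card_fin]; decide)
  have hup : u p = 0 := hu₀ 0
  have huq : u q = 0 := hu₀ 1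
  have huz : u z = 0 := hu₀ 2
  obtain ⟨s, hs, hus, hTs⟩ := hS.exists_mem_linearIndependent_pair (T := {p, q})
    (hS.sliceCard_zero_eq_eight hu hp hq hpq hup huq) (by simp [insert_subset_iff, hp, hq])
    (Finset.card_le_two.trans (by decide))
  have hps := hB.apply_ne_zero hS hp hs (hTs p (by simp))
  have hqs := hB.apply_ne_zero hS hq hs (hTs q (by simp))
  obtain ⟨a, b, c, rfl⟩ :=
    exists_smul_add_smul_add_smul_eq hS.finrank_eq hu hpq z_notMem hup huq huz hus
  have isotropic := hB.apply_self _ hs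
  simp only [map_add, map_smul, LinearMap.add_apply, LinearMap.smul_apply, smul_eq_mul, gram, hpz,
    hqz, hzz, hB.apply_comm q p, mul_zero, add_zero, zero_add] at isotropic hps hqs
  have : B p q * (b * c) = 0 := by
    linear_combination 2 * isotropic - b * c * B p q * (by decide : (3 : ZMod 3) = 0)
  rcases mul_eq_zero.1 ((mul_eq_zero.1 this).resolve_left hBpq) with rfl | rfl <;> simp at hps hqs

lemma exists_orthonormal_pair (hB : IsQuadricForm S B) (hS : IsOvoid S) {p q : V} (hp : p ∈ S)
    (hq : q ∈ S) (hpq : LinearIndependent (ZMod 3) ![p, q]) :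
    ∃ f g, (B p f = 0 ∧ B q f = 0) ∧ (B p g = 0 ∧ B q g = 0) ∧
      B f f = 1 ∧ B g g = 1 ∧ B f g = 0 := by
  have anisotropic {z : V} (hz : z ≠ 0) (hpz : B p z = 0) (hqz : B q z = 0) : B z z ≠ 0 :=
    mt (hB.eq_zero_of_apply_eq_zero hS hp hq hpq hpz hqz) hz
  obtain ⟨f, hf, perp_f⟩ := exists_ne_zero_forall_apply_eq_zero (K := ZMod 3) (g := ![B p, B q])
    (by rw [hS.finrank_eq, Fintype.card_fin]; decide)
  obtain ⟨g, hg, perp_g⟩ := exists_ne_zero_forall_apply_eq_zero (K := ZMod 3)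
    (g := ![B p, B q, B f]) (by rw [hS.finrank_eq, Fintype.card_fin]; decide)
  simp only [Fin.forall_fin_succ, Matrix.cons_val_zero, Matrix.cons_val_succ, IsEmpty.forall_iff,
    and_true] at perp_f perp_g
  obtain ⟨hpf, hqf⟩ := perp_f
  obtain ⟨hpg, hqg, hfg⟩ := perp_g
  have hgf : B g f = 0 := (hB.apply_comm g f).trans hfg
  have hff := anisotropic hf hpf hqf
  have hgg := anisotropic hg hpg hqg
  have hsum : B f f + B g g ≠ 0 := by
    have add_ne_zero : f + g ≠ 0 := fun h => hff (by simpa [hfg] using congrArg (B f) h)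
    simpa [hfg, hgf] using anisotropic add_ne_zero (by simp [hpf, hpg]) (by simp [hqf, hqg])
  have norms : ∀ a b : ZMod 3, a ≠ 0 → b ≠ 0 → a + b ≠ 0 → a = 1 ∧ b = 1 ∨ a = 2 ∧ b = 2 := by
    decide
  rcases norms _ _ hff hgg hsum with ⟨hf₁, hg₁⟩ | ⟨hf₂, hg₂⟩
  · exact ⟨f, g, ⟨hpf, hqf⟩, ⟨hpg, hqg⟩, hf₁, hg₁, hfg⟩
  · have two_add_two : (2 : ZMod 3) + 2 = 1 := rfl
    refine ⟨f + g, f - g, ⟨?_, ?_⟩, ⟨?_, ?_⟩, ?_, ?_, ?_⟩ <;>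
      simp [hpf, hqf, hpg, hqg, hfg, hgf, hf₂, hg₂, two_add_two]

lemma eq_of_apply_eq {B' : LinearMap.BilinForm (ZMod 3) V} (hB : IsQuadricForm S B)
    (hB' : IsQuadricForm S B') (hS : IsOvoid S) {p q : V} (hp : p ∈ S) (hq : q ∈ S)
    (hpq : LinearIndependent (ZMod 3) ![p, q]) (h : B p q = B' p q) : B = B' := by
  by_contra ne
  have quadric : IsQuadricForm S (B - B') :=
    { ne_zero := sub_ne_zero.2 ne
      apply_comm x y := congrArg₂ (· - ·) (hB.apply_comm x y) (hB'.apply_comm x y)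
      apply_self x hx := sub_eq_zero.2 ((hB.apply_self x hx).trans (hB'.apply_self x hx).symm) }
  exact quadric.apply_ne_zero hS hp hq hpq (sub_eq_zero.2 h)

end IsQuadricForm

end Quadric

/-- The Gram matrix of an orthogonal sum of a hyperbolic plane and an anisotropic plane, with
quadratic form `2 * x 0 * x 1 + x 2 ^ 2 + x 3 ^ 2`. -/
def ellipticGram : Matrix (Fin 4) (Fin 4) (ZMod 3) :=
  !![0, 1, 0, 0; 1, 0, 0, 0; 0, 0, 1, 0; 0, 0, 0, 1]

/-- The standard ovoid: the nonzero isotropic vectors of `ellipticGram`. -/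
def standardOvoid : Finset (Fin 4 → ZMod 3) := {x | x ≠ 0 ∧ x 0 * x 1 = x 2 ^ 2 + x 3 ^ 2}

lemma mem_standardOvoid {x : Fin 4 → ZMod 3} :
    x ∈ standardOvoid ↔ x ≠ 0 ∧ x 0 * x 1 = x 2 ^ 2 + x 3 ^ 2 :=
  mem_filter_univ x

lemma toBilin'_ellipticGram_apply (x y : Fin 4 → ZMod 3) :
    Matrix.toBilin' ellipticGram x y = x 0 * y 1 + x 1 * y 0 + x 2 * y 2 + x 3 * y 3 := by
  simp [Matrix.toBilin'_apply, Fin.sum_univ_four, ellipticGram]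

lemma isOvoid_standardOvoid : IsOvoid standardOvoid where
  finrank_eq := finrank_fin_fun (ZMod 3)
  threeAPFree a ha b hb c hc h := by
    have eq_of_neg_add_mem :
        ∀ a ∈ standardOvoid, ∀ b ∈ standardOvoid, -(a + b) ∈ standardOvoid → a = b := by
      decide +kernel
    refine eq_of_neg_add_mem a ha b hb ?_
    rwa [neg_add, ← add_self_eq_neg b, ← h, neg_add_cancel_left]
  card_eq := by decide +kernel
  neg_mem := by decide +kernel

lemma isQuadricForm_standardOvoid :
    IsQuadricForm standardOvoid (Matrix.toBilin' ellipticGram) where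
  ne_zero h := by
    simpa [ellipticGram] using LinearMap.congr_fun₂ h (Pi.single 0 1) (Pi.single 1 1)
  apply_comm x y := by
    simp only [toBilin'_ellipticGram_apply]
    ring
  apply_self x hx := by
    rw [toBilin'_ellipticGram_apply]
    linear_combination x 0 * x 1 * (by decide : (3 : ZMod 3) = 0) - (mem_standardOvoid.1 hx).2

section Frames

variable {V : Type*} [AddCommGroup V] [Module (ZMod 3) V] {S : Finset V}
  {B : LinearMap.BilinForm (ZMod 3) V}

lemma apply_linearCombination {v : Fin 4 → V} (gram : ∀ i j, B (v i) (v j) = ellipticGram i j)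
    (x y : Fin 4 → ZMod 3) :
    B (Fintype.linearCombination (ZMod 3) v x) (Fintype.linearCombination (ZMod 3) v y) =
      x 0 * y 1 + x 1 * y 0 + x 2 * y 2 + x 3 * y 3 := by
  simp [Fintype.linearCombination_apply, Fin.sum_univ_four, gram, ellipticGram]

lemma exists_linearEquiv_of_gram (hS : IsOvoid S) (hB : IsQuadricForm S B)
    {v : Fin 4 → V} (gram : ∀ i j, B (v i) (v j) = ellipticGram i j) :
    ∃ T : (Fin 4 → ZMod 3) ≃ₗ[ZMod 3] V,
      (∀ x, T x ∈ S ↔ x ∈ standardOvoid) ∧ ∀ i, T (Pi.single i 1) = v i := by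
  let T := Fintype.linearCombination (ZMod 3) v
  have injective : Function.Injective T := by
    refine (injective_iff_map_eq_zero T).2 fun x hx => ?_
    have orthogonal (y : Fin 4 → ZMod 3) : x 0 * y 1 + x 1 * y 0 + x 2 * y 2 + x 3 * y 3 = 0 := by
      rw [← apply_linearCombination gram x y]
      exact (congrArg (B · _) hx).trans (LinearMap.map_zero₂ B _)
    ext i
    have := orthogonal (Pi.single 0 1)
    have := orthogonal (Pi.single 1 1)
    have := orthogonal (Pi.single 2 1)
    have := orthogonal (Pi.single 3 1)
    fin_cases i <;> simp_all
  have : FiniteDimensional (ZMod 3) V := .of_finrank_pos (by rw [hS.finrank_eq]; decide)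
  let e : (Fin 4 → ZMod 3) ≃ₗ[ZMod 3] V :=
    LinearEquiv.ofInjectiveOfFinrankEq T injective (by rw [hS.finrank_eq, finrank_fin_fun])
  have symm_mem {y : V} (hy : y ∈ S) : e.symm y ∈ standardOvoid := by
    obtain ⟨x, rfl⟩ := e.surjective y
    rw [e.symm_apply_apply, mem_standardOvoid]
    have isotropic := (apply_linearCombination gram x x).symm.trans (hB.apply_self _ hy)
    refine ⟨?_, by linear_combination x 0 * x 1 * (by decide : (3 : ZMod 3) = 0) - isotropic⟩
    rintro rfl
    exact hS.zero_notMem (by rwa [map_zero] at hy)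
  have image_eq : S.map e.symm.toEquiv.toEmbedding = standardOvoid := by
    refine eq_of_subset_of_card_le ?_ ?_
    · exact map_subset_iff_subset_preimage.2 fun y hy => mem_preimage.2 (symm_mem hy)
    · rw [card_map, hS.card_eq, isOvoid_standardOvoid.card_eq]
  refine ⟨e, fun x => ?_, fun i => ?_⟩
  · rw [← image_eq, mem_map_equiv]
    rfl
  · exact (Fintype.linearCombination_apply_single ..).trans (one_smul _ _)

end Frames

lemma IsOvoid.exists_linearEquiv {V : Type*} [AddCommGroup V] [Module (ZMod 3) V] [Finite V]
    {S : Finset V} (hS : IsOvoid S) {p q : V} (hp : p ∈ S) (hq : q ∈ S)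
    (hpq : LinearIndependent (ZMod 3) ![p, q]) :
    ∃ T : (Fin 4 → ZMod 3) ≃ₗ[ZMod 3] V,
      (∀ x, T x ∈ S ↔ x ∈ standardOvoid) ∧ T (Pi.single 0 1) = p ∧ T (Pi.single 1 1) = q := by
  obtain ⟨B₀, hB₀⟩ := hS.exists_isQuadricForm
  have hc := hB₀.apply_ne_zero hS hp hq hpq
  obtain ⟨B, hB, hBpq⟩ : ∃ B, IsQuadricForm S B ∧ B p q = 1 :=
    ⟨(B₀ p q)⁻¹ • B₀, hB₀.smul (inv_ne_zero hc), inv_mul_cancel₀ hc⟩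
  obtain ⟨f, g, ⟨hpf, hqf⟩, ⟨hpg, hqg⟩, hff, hgg, hfg⟩ := hB.exists_orthonormal_pair hS hp hq hpq
  have gram (i j : Fin 4) : B (![p, q, f, g] i) (![p, q, f, g] j) = ellipticGram i j := by
    fin_cases i <;> fin_cases j <;>
      simp [ellipticGram, hB.apply_self, hp, hq, hBpq, hpf, hqf, hpg, hqg, hff, hgg, hfg,
        hB.apply_comm q p, hB.apply_comm f, hB.apply_comm g]
  obtain ⟨T, hT, hTv⟩ := exists_linearEquiv_of_gram hS hB gram
  exact ⟨T, hT, hTv 0, hTv 1⟩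

lemma single_zero_mem_standardOvoid : Pi.single 0 1 ∈ standardOvoid := by
  decide +kernel

lemma single_one_mem_standardOvoid : Pi.single 1 1 ∈ standardOvoid := by
  decide +kernel

lemma toBilin'_ellipticGram_map {T : (Fin 4 → ZMod 3) ≃ₗ[ZMod 3] (Fin 4 → ZMod 3)}
    (hT : ∀ x, T x ∈ standardOvoid ↔ x ∈ standardOvoid)
    (h₀ : T (Pi.single 0 1) = Pi.single 0 1) (h₁ : T (Pi.single 1 1) = Pi.single 1 1)
    (x y : Fin 4 → ZMod 3) :
    Matrix.toBilin' ellipticGram (T x) (T y) = Matrix.toBilin' ellipticGram x y := by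
  have hB := isQuadricForm_standardOvoid
  have hBT : IsQuadricForm standardOvoid
      ((Matrix.toBilin' ellipticGram).comp (T : _ →ₗ[ZMod 3] _) T) :=
    { ne_zero h := hB.ne_zero <| LinearMap.ext₂ fun x y => by
        simpa using LinearMap.congr_fun₂ h (T.symm x) (T.symm y)
      apply_comm x y := hB.apply_comm (T x) (T y)
      apply_self x hx := hB.apply_self (T x) ((hT x).2 hx) }
  have independent : LinearIndependent (ZMod 3)
      ![(Pi.single 0 1 : Fin 4 → ZMod 3), Pi.single 1 1] :=
    (isOvoid_standardOvoid.linearIndependent_pair_iff single_zero_mem_standardOvoid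
      single_one_mem_standardOvoid).2 (by decide +kernel)
  have forms_eq := hBT.eq_of_apply_eq hB isOvoid_standardOvoid single_zero_mem_standardOvoid
    single_one_mem_standardOvoid independent (by simp [h₀, h₁])
  exact LinearMap.congr_fun₂ forms_eq x y

section OrthogonalBlock

/-- The transposed block of the matrix of `T` that describes the action on the last two
coordinates. -/
def orthogonalBlock (T : (Fin 4 → ZMod 3) ≃ₗ[ZMod 3] (Fin 4 → ZMod 3)) :
    Matrix (Fin 2) (Fin 2) (ZMod 3) :=
  .of fun i j => T (Pi.single i.succ.succ 1) j.succ.succ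

variable {T : (Fin 4 → ZMod 3) ≃ₗ[ZMod 3] (Fin 4 → ZMod 3)}
  (hT : ∀ x, T x ∈ standardOvoid ↔ x ∈ standardOvoid)
  (h₀ : T (Pi.single 0 1) = Pi.single 0 1) (h₁ : T (Pi.single 1 1) = Pi.single 1 1)

include hT h₀ h₁

lemma apply_single_succ_succ (i : Fin 2) :
    T (Pi.single i.succ.succ 1) = ![0, 0, orthogonalBlock T i 0, orthogonalBlock T i 1] := by
  have isometry := toBilin'_ellipticGram_map hT h₀ h₁ (Pi.single i.succ.succ 1)
  have coord_zero := isometry (Pi.single 1 1)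
  have coord_one := isometry (Pi.single 0 1)
  simp only [h₀, h₁, toBilin'_ellipticGram_apply] at coord_zero coord_one
  have one_ne_succ_succ : (1 : Fin 4) ≠ i.succ.succ := by fin_cases i <;> decide
  ext j
  fin_cases j
  · simpa using coord_zero
  · simpa [one_ne_succ_succ] using coord_one
  · rfl
  · rfl

lemma orthogonalBlock_mem_orthogonalGroup :
    orthogonalBlock T ∈ Matrix.orthogonalGroup (Fin 2) (ZMod 3) := by
  rw [Matrix.mem_orthogonalGroup_iff]
  ext i j
  have isometry :=
    toBilin'_ellipticGram_map hT h₀ h₁ (Pi.single i.succ.succ 1) (Pi.single j.succ.succ 1)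
  rw [apply_single_succ_succ hT h₀ h₁, apply_single_succ_succ hT h₀ h₁,
    toBilin'_ellipticGram_apply, Matrix.toBilin'_single] at isometry
  have gram_block : ellipticGram i.succ.succ j.succ.succ = (1 : Matrix _ _ (ZMod 3)) i j := by
    fin_cases i <;> fin_cases j <;> rfl
  rw [← gram_block, ← isometry]
  simp [Matrix.mul_apply]

lemma eq_of_orthogonalBlock_eq {T' : (Fin 4 → ZMod 3) ≃ₗ[ZMod 3] (Fin 4 → ZMod 3)}
    (hT' : ∀ x, T' x ∈ standardOvoid ↔ x ∈ standardOvoid)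
    (h₀' : T' (Pi.single 0 1) = Pi.single 0 1) (h₁' : T' (Pi.single 1 1) = Pi.single 1 1)
    (h : orthogonalBlock T = orthogonalBlock T') : T = T' := by
  refine LinearEquiv.toLinearMap_injective ((Pi.basisFun (ZMod 3) (Fin 4)).ext fun i => ?_)
  rw [Pi.basisFun_apply]
  refine Fin.cases (h₀.trans h₀'.symm) (Fin.cases (h₁.trans h₁'.symm) fun i => ?_) i
  simp only [LinearEquiv.coe_coe]
  rw [apply_single_succ_succ hT h₀ h₁, apply_single_succ_succ hT' h₀' h₁', h]

end OrthogonalBlock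

lemma exists_orthogonalBlock_eq {A : Matrix (Fin 2) (Fin 2) (ZMod 3)}
    (hA : A ∈ Matrix.orthogonalGroup (Fin 2) (ZMod 3)) :
    ∃ T : (Fin 4 → ZMod 3) ≃ₗ[ZMod 3] (Fin 4 → ZMod 3),
      (∀ x, T x ∈ standardOvoid ↔ x ∈ standardOvoid) ∧ T (Pi.single 0 1) = Pi.single 0 1 ∧
        T (Pi.single 1 1) = Pi.single 1 1 ∧ orthogonalBlock T = A := by
  rw [Matrix.mem_orthogonalGroup_iff] at hA
  have entry (i j : Fin 2) :
      A i 0 * A j 0 + A i 1 * A j 1 = (1 : Matrix (Fin 2) (Fin 2) _) i j := by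
    rw [← hA, Matrix.mul_apply, Fin.sum_univ_two]
    rfl
  let v : Fin 4 → Fin 4 → ZMod 3 :=
    ![Pi.single 0 1, Pi.single 1 1, ![0, 0, A 0 0, A 0 1], ![0, 0, A 1 0, A 1 1]]
  have gram (i j : Fin 4) : Matrix.toBilin' ellipticGram (v i) (v j) = ellipticGram i j := by
    rw [toBilin'_ellipticGram_apply]
    fin_cases i <;> fin_cases j <;> simp [v, entry, ellipticGram]
  obtain ⟨T, hT, hTv⟩ :=
    exists_linearEquiv_of_gram isOvoid_standardOvoid isQuadricForm_standardOvoid gram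
  refine ⟨T, hT, hTv 0, hTv 1, ?_⟩
  ext i j
  have row := congrFun (hTv i.succ.succ) j.succ.succ
  refine row.trans ?_
  fin_cases i <;> fin_cases j <;> rfl

section Stabilizer

open MulAction
open scoped Pointwise

lemma card_stabilizer_eq_of_linearEquiv {K V W : Type*} [Semiring K] [AddCommMonoid V] [Module K V]
    [AddCommMonoid W] [Module K W] [DecidableEq V] [DecidableEq W] {S : Finset V} {S' : Finset W}
    (e : V ≃ₗ[K] W) (he : ∀ x, e x ∈ S' ↔ x ∈ S) :
    Nat.card (stabilizer (V ≃ₗ[K] V) S) = Nat.card (stabilizer (W ≃ₗ[K] W) S') := by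
  let conj : (V ≃ₗ[K] V) ≃ (W ≃ₗ[K] W) :=
    { toFun T := e.symm.trans (T.trans e)
      invFun T := e.trans (T.trans e.symm)
      left_inv T := by ext; simp
      right_inv T := by ext; simp }
  refine Nat.card_congr (conj.subtypeEquiv fun T => ?_)
  rw [mem_stabilizer_finset, mem_stabilizer_finset, e.surjective.forall]
  simp [conj, he]

/-- The group of linear automorphisms of the standard ovoid. -/
abbrev ovoidStabilizer : Subgroup ((Fin 4 → ZMod 3) ≃ₗ[ZMod 3] (Fin 4 → ZMod 3)) :=
  stabilizer _ standardOvoid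

lemma mem_ovoidStabilizer {T : (Fin 4 → ZMod 3) ≃ₗ[ZMod 3] (Fin 4 → ZMod 3)} :
    T ∈ ovoidStabilizer ↔ ∀ x, T x ∈ standardOvoid ↔ x ∈ standardOvoid :=
  mem_stabilizer_finset

/-- The hyperbolic pair formed by the first two unit vectors. -/
def hyperbolicPair : (Fin 4 → ZMod 3) × (Fin 4 → ZMod 3) := (Pi.single 0 1, Pi.single 1 1)

lemma orbit_hyperbolicPair :
    orbit ovoidStabilizer hyperbolicPair =
      ({x ∈ standardOvoid ×ˢ standardOvoid | x.2 ≠ x.1 ∧ x.2 ≠ -x.1} : Finset _) := by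
  ext ⟨p, q⟩
  rw [mem_orbit_iff, mem_coe, mem_filter, mem_product]
  constructor
  · rintro ⟨⟨T, hT⟩, hpq⟩
    obtain ⟨rfl, rfl⟩ := Prod.ext_iff.1 hpq
    rw [mem_ovoidStabilizer] at hT
    refine ⟨⟨(hT _).2 single_zero_mem_standardOvoid, (hT _).2 single_one_mem_standardOvoid⟩, ?_, ?_⟩
    · exact T.injective.ne (by decide +kernel)
    · exact (T.injective.ne (by decide +kernel)).trans_eq (map_neg T _)
  · rintro ⟨⟨hp, hq⟩, ne⟩
    have independent := (isOvoid_standardOvoid.linearIndependent_pair_iff hp hq).2 ne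
    obtain ⟨T, hT, hTp, hTq⟩ := isOvoid_standardOvoid.exists_linearEquiv hp hq independent
    exact ⟨⟨T, mem_ovoidStabilizer.2 hT⟩, Prod.ext hTp hTq⟩

lemma card_orbit_hyperbolicPair : (orbit ovoidStabilizer hyperbolicPair).ncard = 360 := by
  rw [orbit_hyperbolicPair, Set.ncard_coe_finset]
  decide +kernel

lemma card_orthogonalGroup : Nat.card (Matrix.orthogonalGroup (Fin 2) (ZMod 3)) = 8 := by
  have card_eq : Fintype.card {A : Matrix (Fin 2) (Fin 2) (ZMod 3) // A * A.transpose = 1} = 8 := by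
    decide +kernel
  rw [← card_eq, ← Nat.card_eq_fintype_card]
  exact Nat.card_congr (Equiv.subtypeEquivRight fun _ => Matrix.mem_orthogonalGroup_iff ..)

lemma card_stabilizer_hyperbolicPair :
    Nat.card (stabilizer ovoidStabilizer hyperbolicPair) = 8 := by
  have mem (T : stabilizer ovoidStabilizer hyperbolicPair) := mem_ovoidStabilizer.1 T.1.2
  have fix (T : stabilizer ovoidStabilizer hyperbolicPair) := Prod.ext_iff.1 T.2
  rw [← card_orthogonalGroup]
  refine Nat.card_eq_of_bijective (fun T => ⟨orthogonalBlock T.1.1,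
    orthogonalBlock_mem_orthogonalGroup (mem T) (fix T).1 (fix T).2⟩) ⟨?_, ?_⟩
  · intro T T' h
    exact Subtype.ext (Subtype.ext (eq_of_orthogonalBlock_eq (mem T) (fix T).1 (fix T).2
      (mem T') (fix T').1 (fix T').2 (congrArg Subtype.val h)))
  · rintro ⟨A, hA⟩
    obtain ⟨T, hT, h₀, h₁, rfl⟩ := exists_orthogonalBlock_eq hA
    exact ⟨⟨⟨T, mem_ovoidStabilizer.2 hT⟩, Prod.ext h₀ h₁⟩, rfl⟩

lemma card_ovoidStabilizer : Nat.card ovoidStabilizer = 2880 := by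
  rw [← Subgroup.card_mul_index (stabilizer ovoidStabilizer hyperbolicPair), index_stabilizer,
    card_stabilizer_hyperbolicPair, card_orbit_hyperbolicPair]

lemma IsOvoid.card_stabilizer {V : Type*} [AddCommGroup V] [Module (ZMod 3) V] [Finite V]
    [DecidableEq V] {S : Finset V} (hS : IsOvoid S) :
    Nat.card (stabilizer (V ≃ₗ[ZMod 3] V) S) = 2880 := by
  obtain ⟨p, hp⟩ := card_pos.1 (show 0 < #S by rw [hS.card_eq]; decide)
  obtain ⟨q, hq, hqp⟩ := exists_mem_notMem_of_card_lt_card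
    (show #{p, -p} < #S from Finset.card_le_two.trans_lt (by rw [hS.card_eq]; decide))
  have independent : LinearIndependent (ZMod 3) ![p, q] :=
    (hS.linearIndependent_pair_iff hp hq).2 (by simpa using hqp)
  obtain ⟨e, he, -⟩ := hS.exists_linearEquiv hp hq independent
  exact (card_stabilizer_eq_of_linearEquiv e he).symm.trans card_ovoidStabilizer

end Stabilizer

section MaximalCap

variable {V : Type*} [AddCommGroup V] [Module (ZMod 3) V]

lemma exists_threeAPFree_card_eq_twenty (hV : finrank (ZMod 3) V = 4) :
    ∃ D : Finset V, ThreeAPFree (D : Set V) ∧ #D = 20 := by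
  have : FiniteDimensional (ZMod 3) V := .of_finrank_pos (by rw [hV]; decide)
  let e : (Fin 4 → ZMod 3) ≃ₗ[ZMod 3] V :=
    LinearEquiv.ofFinrankEq _ _ ((finrank_fin_fun (ZMod 3)).trans hV.symm)
  refine ⟨standardOvoid.map e.toEquiv.toEmbedding, ?_, ?_⟩
  · rw [coe_map]
    exact isOvoid_standardOvoid.threeAPFree.image' e e.injective.injOn
  · rw [card_map, isOvoid_standardOvoid.card_eq]

lemma isOvoid_of_sum_eq_zero [Finite V] (hV : finrank (ZMod 3) V = 4) {S : Finset V}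
    (cap : ThreeAPFree (S : Set V)) (maximal : ∀ D : Finset V, ThreeAPFree (D : Set V) → #D ≤ #S)
    (sum_zero : ∑ x ∈ S, x = 0) : IsOvoid S := by
  obtain ⟨D, hD, hD_card⟩ := exists_threeAPFree_card_eq_twenty hV
  have card_eq : #S = 20 := (card_le_twenty hV cap).antisymm (hD_card ▸ maximal D hD)
  exact ⟨hV, cap, card_eq, fun x hx => neg_mem_of_sum_eq_zero hV cap card_eq sum_zero hx⟩

lemma isCap_iff_threeAPFree {n : ℕ} {C : Finset (Fin n → ZMod 3)} :
    IsCap C ↔ ThreeAPFree (C : Set (Fin n → ZMod 3)) := by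
  constructor
  · intro cap x hx y hy z hz h
    by_contra hxy
    have sum_zero : x + y + z = 0 := by rw [add_right_comm, h, add_self_eq_neg, neg_add_cancel]
    refine cap x hx y hy z hz hxy ?_ ?_ sum_zero <;> rintro rfl
    · exact hxy (neg_injective (by rw [← add_self_eq_neg, h, add_self_eq_neg]))
    · exact hxy (add_right_cancel h)
  · intro cap x hx y hy z hz hxy _ _ h
    exact hxy (eq_of_add_add_eq_zero cap hx hy hz h).1

end MaximalCap

end TernaryCap

open TernaryCap in
open scoped Pointwise in
theorem card_linear_stabilizer_maximal_cap_AG43_general {V : Type*} [AddCommGroup V]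
    [Module (ZMod 3) V] [DecidableEq V] (hV : Module.finrank (ZMod 3) V = 4) {S : Finset V}
    (cap : ThreeAPFree (S : Set V))
    (maximal : ∀ D : Finset V, ThreeAPFree (D : Set V) → D.card ≤ S.card)
    (sum_zero : ∑ x ∈ S, x = 0) :
    Nat.card (MulAction.stabilizer (V ≃ₗ[ZMod 3] V) S) = 2880 := by
  have : FiniteDimensional (ZMod 3) V := .of_finrank_pos (by rw [hV]; decide)
  have : Finite V := Module.finite_of_finite (ZMod 3)
  exact (isOvoid_of_sum_eq_zero hV cap maximal sum_zero).card_stabilizer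

/-- A maximal cap `S` in `AG(4,3)` with anchor the zero vector is stabilized (as a set)
by exactly 2880 linear automorphisms of `Fin 4 → ZMod 3`. -/
theorem card_linear_stabilizer_maximal_cap_AG43
    (S : Finset (Fin 4 → ZMod 3)) (hS : MaximalCap S) (haS : ∑ x ∈ S, x = 0) :
    Nat.card {T : (Fin 4 → ZMod 3) ≃ₗ[ZMod 3] (Fin 4 → ZMod 3) //
      S.image (fun x => T x) = S} = 2880 :=
  card_linear_stabilizer_maximal_cap_AG43_general (Module.finrank_fin_fun (ZMod 3))
    (TernaryCap.isCap_iff_threeAPFree.1 hS.1)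
    (fun D hD => hS.2 D (TernaryCap.isCap_iff_threeAPFree.2 hD)) haS
end

section
/- If S and T are maximal caps in AG(4,3) with different anchor points (i.e. −∑_{x∈S} x ≠ −∑_{x∈T} x), then S and T intersect in at least one point. -/
/-!
A maximal cap of `AG(4,3)` has 20 points. The number of triples of its points with sum in a given
linear hyperplane depends only on the sizes of the three parallel slices; averaging it over all
hyperplanes produces slices of sizes `2, 9, 9` or `3, 9, 8`. In the same way, an extremal cap of
space has slices `1, 4, 4` and one of the plane has slices `0, 2, 2`, and assembling the slices
shows that the case `3, 9, 8` does not occur and that the cap is affinely equivalent to the cone of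
nonzero singular vectors of an elliptic quadratic form. The anchor commutes with affine maps
because `20 = -1` in `ZMod 3`, so it is the vertex of the cone.

For two maximal caps with different anchors we may thus assume that the first one is the standard
cone at the origin, and the second one the cone with vertex `v ≠ 0` of another form, also of
determinant `-1`. Isometries of the first form bring `v` to `(1, y, 0, 0)`, and disjointness of the
two cones then gives conditions on the coefficients of the second form that are incompatible with
determinant `-1`.
-/

/-- The affine space `AG(n,3)`, whose points are its vectors. -/
abbrev AG (n : ℕ) := Fin n → ZMod 3

namespace AG

open Finset Matrix

variable {n : ℕ}

theorem add_add_self (x : AG n) : x + x + x = 0 := by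
  rw [← ZModModule.char_nsmul_eq_zero 3 x]
  abel

/-- Affine equivalence of point sets of `AG(n,3)`. -/
def AffineEquivalent (S T : Finset (AG n)) : Prop :=
  ∃ f : AG n ≃ᵃ[ZMod 3] AG n, ∀ x, f x ∈ T ↔ x ∈ S

theorem affineEquiv_apply_eq_add (f : AG n ≃ᵃ[ZMod 3] AG n) (x : AG n) :
    f x = f.linear x + f 0 := by
  simpa using f.map_vadd 0 x

theorem affineEquiv_sum_three (f : AG n ≃ᵃ[ZMod 3] AG n) (x y z : AG n) :
    f x + f y + f z = f.linear (x + y + z) := by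
  have h0 := add_add_self (f 0)
  rw [affineEquiv_apply_eq_add f x, affineEquiv_apply_eq_add f y, affineEquiv_apply_eq_add f z,
    map_add, map_add]
  linear_combination (exp := 1) h0

namespace AffineEquivalent

variable {S T U : Finset (AG n)}

theorem trans (h : AffineEquivalent S T) (h' : AffineEquivalent T U) : AffineEquivalent S U := by
  obtain ⟨f, hf⟩ := h
  obtain ⟨g, hg⟩ := h'
  exact ⟨f.trans g, fun x => (hg (f x)).trans (hf x)⟩

theorem card_eq (h : AffineEquivalent S T) : #T = #S := by
  obtain ⟨f, hf⟩ := h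
  exact (card_equiv f.toEquiv fun x => (hf x).symm).symm

theorem isCap (h : AffineEquivalent S T) (hS : IsCap S) : IsCap T := by
  obtain ⟨f, hf⟩ := h
  intro x hx y hy z hz hxy hxz hyz hsum
  obtain ⟨x, rfl⟩ := f.surjective x
  obtain ⟨y, rfl⟩ := f.surjective y
  obtain ⟨z, rfl⟩ := f.surjective z
  rw [affineEquiv_sum_three, map_eq_zero_iff _ f.linear.injective] at hsum
  exact hS x ((hf x).1 hx) y ((hf y).1 hy) z ((hf z).1 hz) (ne_of_apply_ne f hxy)
    (ne_of_apply_ne f hxz) (ne_of_apply_ne f hyz) hsum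

end AffineEquivalent

theorem affineEquivalent_map (S : Finset (AG n)) (f : AG n ≃ᵃ[ZMod 3] AG n) :
    AffineEquivalent S (S.map f.toEquiv.toEmbedding) :=
  ⟨f, fun _ => mem_map' f.toEquiv.toEmbedding⟩

theorem _root_.IsCap.subset {S T : Finset (AG n)} (hT : IsCap T) (h : S ⊆ T) : IsCap S :=
  fun x hx y hy z hz => hT x (h hx) y (h hy) z (h hz)

/-- The section of `S` by the hyperplane on which the first coordinate is `c`, as a subset of
`AG(n,3)`. -/
def slice (S : Finset (AG (n + 1))) (c : ZMod 3) : Finset (AG n) :=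
  {y | (Fin.cons c y : AG (n + 1)) ∈ S}

@[simp]
theorem mem_slice {S : Finset (AG (n + 1))} {c : ZMod 3} {y : AG n} :
    y ∈ slice S c ↔ (Fin.cons c y : AG (n + 1)) ∈ S := by
  simp [slice]

theorem card_slice (S : Finset (AG (n + 1))) (c : ZMod 3) :
    #(slice S c) = #{x ∈ S | x 0 = c} := by
  refine card_nbij' (fun y => Fin.cons c y) Fin.tail ?_ ?_ ?_ ?_
  · intro y hy
    simpa using hy
  · rintro x hx
    obtain ⟨hxS, rfl⟩ := mem_filter.1 hx
    simpa using hxS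
  · simp [Set.LeftInvOn]
  · rintro x hx
    obtain ⟨-, rfl⟩ := mem_filter.1 hx
    exact Fin.cons_self_tail x

theorem ext_slice {S T : Finset (AG (n + 1))} (h0 : slice S 0 = slice T 0)
    (h1 : slice S 1 = slice T 1) (h2 : slice S 2 = slice T 2) : S = T := by
  have h (c : ZMod 3) : slice S c = slice T c := by
    obtain rfl | rfl | rfl : c = 0 ∨ c = 1 ∨ c = 2 := by
      clear * -
      decide +revert
    exacts [h0, h1, h2]
  ext x
  rw [← Fin.cons_self_tail x, ← mem_slice, ← mem_slice, h]

theorem cons_add_cons_add_cons (a b c : ZMod 3) (x y z : AG n) :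
    (Fin.cons a x + Fin.cons b y + Fin.cons c z : AG (n + 1)) =
      Fin.cons (a + b + c) (x + y + z) := by
  ext i
  cases i using Fin.cases <;> simp

theorem _root_.IsCap.slice {S : Finset (AG (n + 1))} (hS : IsCap S) (c : ZMod 3) :
    IsCap (slice S c) := by
  intro x hx y hy z hz hxy hxz hyz hsum
  refine hS _ (mem_slice.1 hx) _ (mem_slice.1 hy) _ (mem_slice.1 hz) ?_ ?_ ?_ ?_
  · simpa using hxy
  · simpa using hxz
  · simpa using hyz
  · rw [cons_add_cons_add_cons, hsum, (by clear * -; decide +revert : c + c + c = 0)]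
    exact cons_zero_zero

theorem _root_.IsCap.sum_slices_ne_zero {S : Finset (AG (n + 1))} (hS : IsCap S) {x y z : AG n}
    (hx : x ∈ AG.slice S 0) (hy : y ∈ AG.slice S 1) (hz : z ∈ AG.slice S 2) : x + y + z ≠ 0 := by
  intro hsum
  refine hS _ (mem_slice.1 hx) _ (mem_slice.1 hy) _ (mem_slice.1 hz) ?_ ?_ ?_ ?_
  · exact fun h => absurd (congrFun h 0) (by simp)
  · exact fun h => absurd (congrFun h 0) (show (0 : ZMod 3) ≠ 2 by decide)
  · exact fun h => absurd (congrFun h 0) (show (1 : ZMod 3) ≠ 2 by decide)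
  · rw [cons_add_cons_add_cons, hsum, (by decide : (0 + 1 + 2 : ZMod 3) = 0)]
    exact cons_zero_zero

/-- The affine automorphism of `AG(n+1,3)` that acts on the slice `x 0 = 1` as `f` and on the slice
`x 0 = c` as `f` followed by the translation by `(c - 1) • w`. -/
def extendSlices (f : AG n ≃ᵃ[ZMod 3] AG n) (w : AG n) : AG (n + 1) ≃ᵃ[ZMod 3] AG (n + 1) :=
  ((Fin.consLinearEquiv (ZMod 3) fun _ => ZMod 3).symm ≪≫ₗ
    (LinearEquiv.refl (ZMod 3) (ZMod 3)).skewProd f.linear (LinearMap.toSpanSingleton _ _ w) ≪≫ₗ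
      Fin.consLinearEquiv (ZMod 3) fun _ => ZMod 3).toAffineEquiv.trans
    (AffineEquiv.constVAdd (ZMod 3) _ (Fin.cons 0 (f 0 - w)))

theorem extendSlices_cons (f : AG n ≃ᵃ[ZMod 3] AG n) (w : AG n) (c : ZMod 3) (x : AG n) :
    extendSlices f w (Fin.cons c x) = Fin.cons c (f x + (c - 1) • w) := by
  have h : extendSlices f w (Fin.cons c x) =
      Fin.cons 0 (f 0 - w) + Fin.cons c (f.linear x + c • w) := rfl
  rw [h, affineEquiv_apply_eq_add f x]
  ext i
  cases i using Fin.cases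
  · simp
  · simp only [Pi.add_apply, Fin.cons_succ, Pi.sub_apply, Pi.smul_apply, smul_eq_mul]
    ring

theorem exists_affineEquivalent_extendSlices (S : Finset (AG (n + 1)))
    (f : AG n ≃ᵃ[ZMod 3] AG n) (w : AG n) :
    ∃ T, AffineEquivalent S T ∧ (∀ c, #(slice T c) = #(slice S c)) ∧
      ∀ c x, f x + (c - 1) • w ∈ slice T c ↔ x ∈ slice S c := by
  refine ⟨_, affineEquivalent_map S (extendSlices f w), ?_⟩
  have hmem (c x) : f x + (c - 1) • w ∈ slice (S.map (extendSlices f w).toEquiv.toEmbedding) c ↔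
      x ∈ slice S c := by
    rw [mem_slice, mem_slice, ← extendSlices_cons]
    exact mem_map' _
  exact ⟨fun c => (card_equiv (f.toEquiv.trans (Equiv.addRight ((c - 1) • w)))
    fun x => (hmem c x).symm).symm, hmem⟩

/-- The number of points of `S` on the hyperplane `ξ ⬝ᵥ x = c`. -/
def hyperplaneCount (S : Finset (AG n)) (ξ : AG n) (c : ZMod 3) : ℕ := #{x ∈ S | ξ ⬝ᵥ x = c}

theorem exists_linearEquiv_apply_zero_eq_dotProduct {ξ : AG (n + 1)} (hξ : ξ ≠ 0) :
    ∃ g : AG (n + 1) ≃ₗ[ZMod 3] AG (n + 1), ∀ x, g x 0 = ξ ⬝ᵥ x := by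
  obtain ⟨i, hi⟩ := Function.ne_iff.1 hξ
  let g : AG (n + 1) →ₗ[ZMod 3] AG (n + 1) :=
    (dotProductBilin (ZMod 3) (ZMod 3) ξ).vecCons (LinearMap.funLeft _ _ i.succAbove)
  have hg : Function.Injective g := by
    rw [← LinearMap.ker_eq_bot, LinearMap.ker_eq_bot']
    intro x hx
    have hne (j : Fin n) : x (i.succAbove j) = 0 := congrFun hx j.succ
    have hdot : ξ ⬝ᵥ x = 0 := congrFun hx 0
    have hxi : x i = 0 := by
      rw [dotProduct, Fin.sum_univ_succAbove _ i] at hdot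
      simpa [hne, show ξ i ≠ 0 from hi] using hdot
    ext k
    cases k using i.succAboveCases <;> simp [hxi, hne]
  exact ⟨LinearEquiv.ofInjectiveEndo g hg, fun x => rfl⟩

theorem exists_affineEquivalent_card_slice (S : Finset (AG (n + 1))) {ξ : AG (n + 1)}
    (hξ : ξ ≠ 0) (c : ZMod 3) :
    ∃ T, AffineEquivalent S T ∧ ∀ i, #(slice T i) = hyperplaneCount S ξ (c + i) := by
  obtain ⟨g, hg⟩ := exists_linearEquiv_apply_zero_eq_dotProduct hξ
  let f := g.toAffineEquiv.trans (AffineEquiv.constVAdd (ZMod 3) _ (Pi.single 0 (-c)))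
  have hf (x : AG (n + 1)) : f x 0 = -c + ξ ⬝ᵥ x := by simp [f, hg]
  refine ⟨_, affineEquivalent_map S f, fun i => ?_⟩
  rw [card_slice, hyperplaneCount]
  refine (card_equiv f.toEquiv fun x => ?_).symm
  simp [hf, neg_add_eq_iff_eq_add]

theorem sum_zmod_three {M : Type*} [AddCommMonoid M] (F : ZMod 3 → M) :
    ∑ c, F c = F 0 + F 1 + F 2 :=
  Fin.sum_univ_three F

theorem sum_hyperplaneCount (S : Finset (AG n)) (ξ : AG n) :
    ∑ c, hyperplaneCount S ξ c = #S :=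
  (card_eq_sum_card_fiberwise (f := (ξ ⬝ᵥ ·)) fun _ _ => mem_coe.2 (mem_univ _)).symm

theorem hyperplaneCount_neg (S : Finset (AG n)) (ξ : AG n) (c : ZMod 3) :
    hyperplaneCount S (-ξ) c = hyperplaneCount S ξ (-c) := by
  simp [hyperplaneCount, neg_eq_iff_eq_neg]

theorem card_filter_dotProduct_eq_zero (d : AG (n + 1)) :
    #{ξ : AG (n + 1) | ξ ⬝ᵥ d = 0} = 3 ^ n + if d = 0 then 2 * 3 ^ n else 0 := by
  split_ifs with hd
  · simp [hd, ZMod.card]; ring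
  · obtain ⟨g, hg⟩ := exists_linearEquiv_apply_zero_eq_dotProduct hd
    have h : #{ξ : AG (n + 1) | ξ ⬝ᵥ d = 0} = #{x : AG (n + 1) | x 0 = 0} :=
      card_equiv g.toEquiv fun ξ => by simp [hg, dotProduct_comm]
    rw [h, ← card_slice, add_zero]
    simp [slice, ZMod.card]

theorem sum_apply_dotProduct (S : Finset (AG n)) (ξ : AG n) (F : ZMod 3 → ℕ) :
    ∑ x ∈ S, F (ξ ⬝ᵥ x) = ∑ c, hyperplaneCount S ξ c * F c := by
  rw [← sum_fiberwise S (ξ ⬝ᵥ ·)]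
  refine sum_congr rfl fun c _ => ?_
  rw [hyperplaneCount, ← smul_eq_mul, ← sum_const]
  exact sum_congr rfl fun x hx => by rw [(mem_filter.1 hx).2]

/-- The number of triples of points of `S` with sum orthogonal to `ξ`. -/
def tripleCount (S : Finset (AG n)) (ξ : AG n) : ℕ :=
  #{p ∈ S ×ˢ S ×ˢ S | ξ ⬝ᵥ (p.1 + p.2.1 + p.2.2) = 0}

theorem tripleCount_eq_sum (S : Finset (AG n)) (ξ : AG n) :
    tripleCount S ξ = ∑ a, ∑ b,
      hyperplaneCount S ξ a * hyperplaneCount S ξ b * hyperplaneCount S ξ (-(a + b)) := by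
  have hxy (x y : AG n) : #{z ∈ S | ξ ⬝ᵥ (x + y + z) = 0} =
      hyperplaneCount S ξ (-(ξ ⬝ᵥ x + ξ ⬝ᵥ y)) := by
    simp [hyperplaneCount, dotProduct_add, add_eq_zero_iff_neg_eq, eq_comm]
  have hx (a : ZMod 3) := sum_apply_dotProduct S ξ fun b => hyperplaneCount S ξ (-(a + b))
  have h := sum_apply_dotProduct S ξ fun a => ∑ y ∈ S, hyperplaneCount S ξ (-(a + ξ ⬝ᵥ y))
  simp only [tripleCount, card_filter, sum_product] at hxy ⊢
  simp only [hxy, h]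
  simp only [hx, mul_sum, mul_assoc]

theorem tripleCount_eq_sum_pow_add_prod (S : Finset (AG n)) (ξ : AG n) :
    tripleCount S ξ = ∑ c, hyperplaneCount S ξ c ^ 3 + 6 * ∏ c, hyperplaneCount S ξ c := by
  have hprod : ∏ c, hyperplaneCount S ξ c =
      hyperplaneCount S ξ 0 * hyperplaneCount S ξ 1 * hyperplaneCount S ξ 2 :=
    Fin.prod_univ_three _
  simp only [tripleCount_eq_sum, sum_zmod_three, hprod, neg_add_rev,
    show (-1 : ZMod 3) = 2 from rfl,
    show (-2 : ZMod 3) = 1 from rfl, show (1 + 1 : ZMod 3) = 2 from rfl,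
    show (2 + 2 : ZMod 3) = 1 from rfl, show (1 + 2 : ZMod 3) = 0 from rfl,
    show (2 + 1 : ZMod 3) = 0 from rfl, neg_zero, add_zero, zero_add]
  ring

theorem tripleCount_zero_right (S : Finset (AG n)) : tripleCount S 0 = #S ^ 3 := by
  simp [tripleCount, pow_succ, mul_assoc]

theorem sum_card_filter_dotProduct_eq_zero {ι : Type*} (s : Finset ι) (d : ι → AG (n + 1)) :
    ∑ ξ, #{i ∈ s | ξ ⬝ᵥ d i = 0} = 3 ^ n * (#s + 2 * #{i ∈ s | d i = 0}) := by
  have hi (i : ι) : (∑ ξ, if ξ ⬝ᵥ d i = 0 then 1 else 0) =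
      3 ^ n + if d i = 0 then 2 * 3 ^ n else 0 := by
    rw [← card_filter, card_filter_dotProduct_eq_zero]
  simp only [card_filter]
  rw [sum_comm, sum_congr rfl fun i _ => hi i, sum_add_distrib, sum_const, ← sum_filter, sum_const,
    ← card_filter]
  simp only [smul_eq_mul]
  ring

theorem _root_.IsCap.add_add_eq_zero_iff {S : Finset (AG n)} (hS : IsCap S) {x y z : AG n}
    (hx : x ∈ S) (hy : y ∈ S) (hz : z ∈ S) : x + y + z = 0 ↔ x = y ∧ x = z := by
  have third_eq {p q : AG n} (h : p + p + q = 0) : p = q :=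
    add_left_cancel ((add_add_self p).trans h.symm)
  constructor
  · intro h
    by_cases hxy : x = y
    · subst hxy
      exact ⟨rfl, third_eq h⟩
    by_cases hxz : x = z
    · subst hxz
      exact absurd (third_eq ((add_right_comm x x y).trans h)) hxy
    by_cases hyz : y = z
    · subst hyz
      exact absurd (third_eq ((add_rotate x y y).symm.trans h)).symm hxy
    exact absurd h (hS x hx y hy z hz hxy hxz hyz)
  · rintro ⟨rfl, rfl⟩
    exact add_add_self x

theorem _root_.IsCap.sum_tripleCount {S : Finset (AG (n + 1))} (hS : IsCap S) :
    ∑ ξ, tripleCount S ξ = 3 ^ n * (#S ^ 3 + 2 * #S) := by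
  have hdiag : #{p ∈ S ×ˢ S ×ˢ S | p.1 + p.2.1 + p.2.2 = 0} = #S := by
    refine card_nbij' Prod.fst (fun x => (x, x, x)) ?_ ?_ ?_ ?_
    · intro p hp
      simp only [coe_filter, mem_product, Set.mem_ofPred_eq] at hp
      exact hp.1.1
    · intro x hx
      simpa [add_add_self] using hx
    · rintro ⟨x, y, z⟩ hp
      simp only [coe_filter, mem_product, Set.mem_ofPred_eq] at hp
      obtain ⟨rfl, rfl⟩ := (hS.add_add_eq_zero_iff hp.1.1 hp.1.2.1 hp.1.2.2).1 hp.2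
      rfl
    · intro x _
      rfl
  simp only [tripleCount, sum_card_filter_dotProduct_eq_zero, card_product, hdiag]
  ring

theorem exists_ne_zero_mul_add_le_sum (F : AG (n + 1) → ℕ) :
    ∃ ξ ≠ 0, (3 ^ (n + 1) - 1) * F ξ + F 0 ≤ ∑ ξ, F ξ := by
  have hcard : #(univ.erase (0 : AG (n + 1))) = 3 ^ (n + 1) - 1 := by
    simp [ZMod.card]
  have hpos : 0 < 3 ^ (n + 1) - 1 :=
    Nat.sub_pos_of_lt (Nat.one_lt_pow n.succ_ne_zero (by norm_num))
  obtain ⟨ξ, hξ, hle⟩ : ∃ ξ ∈ univ.erase (0 : AG (n + 1)),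
      (3 ^ (n + 1) - 1) * F ξ + F 0 ≤ ∑ ξ, F ξ := by
    refine exists_le_of_sum_le (card_pos.1 (hcard ▸ hpos)) (le_of_eq ?_)
    rw [sum_add_distrib, ← mul_sum, sum_const, sum_const, hcard, smul_eq_mul, smul_eq_mul,
      ← mul_add, sum_erase_add _ _ (mem_univ _)]
  exact ⟨ξ, ne_of_mem_erase hξ, hle⟩

theorem exists_affineEquivalent_card_slice_perm (S : Finset (AG (n + 1))) {ξ : AG (n + 1)}
    (hξ : ξ ≠ 0) (σ : Equiv.Perm (ZMod 3)) :
    ∃ T, AffineEquivalent S T ∧ ∀ i, #(slice T i) = hyperplaneCount S ξ (σ i) := by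
  have hσ : (∀ i, σ i = σ 0 + i) ∨ ∀ i, σ i = σ 0 - i := by
    clear * -
    decide +revert
  obtain hσ | hσ := hσ
  · obtain ⟨T, hST, hT⟩ := exists_affineEquivalent_card_slice S hξ (σ 0)
    exact ⟨T, hST, fun i => by rw [hT, hσ i]⟩
  · obtain ⟨T, hST, hT⟩ := exists_affineEquivalent_card_slice S (neg_ne_zero.2 hξ) (-σ 0)
    refine ⟨T, hST, fun i => ?_⟩
    rw [hT, hσ i, hyperplaneCount_neg, neg_add, neg_neg, sub_eq_add_neg]

theorem exists_affineEquivalent_sorted_slices (S : Finset (AG (n + 1))) {ξ : AG (n + 1)}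
    (hξ : ξ ≠ 0) :
    ∃ T, AffineEquivalent S T ∧ #(slice T 0) ≤ #(slice T 2) ∧ #(slice T 2) ≤ #(slice T 1) ∧
      #(slice T 0) + #(slice T 1) + #(slice T 2) = #S ∧
      tripleCount S ξ = #(slice T 0) ^ 3 + #(slice T 1) ^ 3 + #(slice T 2) ^ 3 +
        6 * (#(slice T 0) * #(slice T 1) * #(slice T 2)) := by
  let σ : Equiv.Perm (ZMod 3) := Tuple.sort (n := 3) (hyperplaneCount S ξ)
  have hmono : Monotone (hyperplaneCount S ξ ∘ σ : Fin 3 → ℕ) := Tuple.monotone_sort _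
  obtain ⟨T, hST, hT⟩ := exists_affineEquivalent_card_slice_perm S hξ ((Equiv.swap 1 2).trans σ)
  refine ⟨T, hST, ?_, ?_, ?_, ?_⟩
  · rw [hT, hT]
    exact hmono (show (0 : Fin 3) ≤ 1 by decide)
  · rw [hT, hT]
    exact hmono (show (1 : Fin 3) ≤ 2 by decide)
  · rw [← sum_zmod_three fun i => #(slice T i), ← sum_hyperplaneCount S ξ]
    simp only [hT]
    exact Equiv.sum_comp _ _
  · have hprod : ∏ i, #(slice T i) = #(slice T 0) * #(slice T 1) * #(slice T 2) :=
      Fin.prod_univ_three _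
    rw [← sum_zmod_three fun i => #(slice T i) ^ 3, ← hprod, tripleCount_eq_sum_pow_add_prod]
    simp only [hT]
    rw [Equiv.sum_comp _ (hyperplaneCount S ξ · ^ 3), Equiv.prod_comp]

theorem _root_.IsCap.exists_sorted_slices {m : ℕ}
    (hm : ∀ T : Finset (AG n), IsCap T → #T ≤ m) {S : Finset (AG (n + 1))} (hS : IsCap S) :
    ∃ T, AffineEquivalent S T ∧ #(slice T 0) ≤ #(slice T 2) ∧ #(slice T 2) ≤ #(slice T 1) ∧
      #(slice T 1) ≤ m ∧ #(slice T 0) + #(slice T 1) + #(slice T 2) = #S ∧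
      (3 ^ (n + 1) - 1) * (#(slice T 0) ^ 3 + #(slice T 1) ^ 3 + #(slice T 2) ^ 3 +
        6 * (#(slice T 0) * #(slice T 1) * #(slice T 2))) + #S ^ 3 ≤
          3 ^ n * (#S ^ 3 + 2 * #S) := by
  obtain ⟨ξ, hξ, hle⟩ := exists_ne_zero_mul_add_le_sum (tripleCount S)
  obtain ⟨T, hST, h02, h21, hsum, htriple⟩ := exists_affineEquivalent_sorted_slices S hξ
  rw [tripleCount_zero_right, hS.sum_tripleCount, htriple] at hle
  exact ⟨T, hST, h02, h21, hm _ ((hST.isCap hS).slice 1), hsum, hle⟩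

theorem _root_.IsCap.card_le_two {S : Finset (AG 1)} (hS : IsCap S) : #S ≤ 2 := by
  by_contra! h
  have hu : S = univ := eq_univ_of_card S (le_antisymm (card_le_univ S) (by simpa [ZMod.card]))
  subst hu
  exact hS ![0] (mem_univ _) ![1] (mem_univ _) ![2] (mem_univ _) (by decide) (by decide) (by decide)
    (by decide)

theorem _root_.IsCap.card_le_four {S : Finset (AG 2)} (hS : IsCap S) : #S ≤ 4 := by
  by_contra! h
  obtain ⟨T, hTS, hT⟩ := exists_subset_card_eq (show 5 ≤ #S from h)
  obtain ⟨U, -, h02, h21, h1, hsum, htriple⟩ :=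
    (hS.subset hTS).exists_sorted_slices fun _ => IsCap.card_le_two
  rw [hT] at hsum htriple
  generalize #(AG.slice U 0) = a at *
  generalize #(AG.slice U 1) = b at *
  generalize #(AG.slice U 2) = c at *
  interval_cases b <;> interval_cases c <;> interval_cases a <;> omega

theorem _root_.IsCap.exists_card_slices_of_card_eq_four {S : Finset (AG 2)} (hS : IsCap S)
    (hcard : #S = 4) :
    ∃ T, AffineEquivalent S T ∧ #(slice T 0) = 0 ∧ #(slice T 1) = 2 ∧ #(slice T 2) = 2 := by
  obtain ⟨T, hST, h02, h21, h1, hsum, htriple⟩ :=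
    hS.exists_sorted_slices fun _ => IsCap.card_le_two
  refine ⟨T, hST, ?_⟩
  rw [hcard] at hsum htriple
  generalize #(AG.slice T 0) = a at *
  generalize #(AG.slice T 1) = b at *
  generalize #(AG.slice T 2) = c at *
  interval_cases b <;> interval_cases c <;> interval_cases a <;> omega

theorem _root_.IsCap.card_le_nine {S : Finset (AG 3)} (hS : IsCap S) : #S ≤ 9 := by
  by_contra! h
  obtain ⟨T, hTS, hT⟩ := exists_subset_card_eq (show 10 ≤ #S from h)
  obtain ⟨U, -, h02, h21, h1, hsum, htriple⟩ :=
    (hS.subset hTS).exists_sorted_slices fun _ => IsCap.card_le_four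
  rw [hT] at hsum htriple
  generalize #(AG.slice U 0) = a at *
  generalize #(AG.slice U 1) = b at *
  generalize #(AG.slice U 2) = c at *
  interval_cases b <;> interval_cases c <;> interval_cases a <;> omega

theorem _root_.IsCap.exists_card_slices_of_card_eq_nine {S : Finset (AG 3)} (hS : IsCap S)
    (hcard : #S = 9) :
    ∃ T, AffineEquivalent S T ∧ #(slice T 0) = 1 ∧ #(slice T 1) = 4 ∧ #(slice T 2) = 4 := by
  obtain ⟨T, hST, h02, h21, h1, hsum, htriple⟩ :=
    hS.exists_sorted_slices fun _ => IsCap.card_le_four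
  refine ⟨T, hST, ?_⟩
  rw [hcard] at hsum htriple
  generalize #(AG.slice T 0) = a at *
  generalize #(AG.slice T 1) = b at *
  generalize #(AG.slice T 2) = c at *
  interval_cases b <;> interval_cases c <;> interval_cases a <;> omega

theorem _root_.IsCap.exists_card_slices_of_card_eq_twenty {S : Finset (AG 4)} (hS : IsCap S)
    (hcard : #S = 20) :
    ∃ T, AffineEquivalent S T ∧ #(slice T 1) = 9 ∧
      (#(slice T 0) = 2 ∧ #(slice T 2) = 9 ∨ #(slice T 0) = 3 ∧ #(slice T 2) = 8) := by
  obtain ⟨T, hST, h02, h21, h1, hsum, htriple⟩ :=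
    hS.exists_sorted_slices fun _ => IsCap.card_le_nine
  refine ⟨T, hST, ?_⟩
  rw [hcard] at hsum htriple
  generalize #(AG.slice T 0) = a at *
  generalize #(AG.slice T 1) = b at *
  generalize #(AG.slice T 2) = c at *
  interval_cases b <;> interval_cases c <;> interval_cases a <;> omega

/-- The standard 4-cap of `AG(2,3)`, a parallelogram centred at the origin. -/
def parallelogram : Finset (AG 2) := {x | x 0 * x 0 = 1 ∧ x 1 * x 1 = 1}

/-- The standard 9-cap of `AG(3,3)`, an elliptic paraboloid. -/
def paraboloid : Finset (AG 3) := {x | x 0 + x 1 * x 1 + x 2 * x 2 = 0}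

/-- The standard 20-cap of `AG(4,3)`, the nonzero singular vectors of an elliptic quadratic form. -/
def ellipticCone : Finset (AG 4) := {x | x ≠ 0 ∧ x 0 * x 1 + x 2 * x 2 + x 3 * x 3 = 0}

theorem exists_eq_compl_singleton {s : Finset (AG 1)} (hs : #s = 2) : ∃ p, s = {p}ᶜ := by
  have hcompl : #sᶜ = 1 := by simp [card_compl, hs, ZMod.card]
  obtain ⟨p, hp⟩ := card_eq_one.1 hcompl
  exact ⟨p, by rw [← hp, compl_compl]⟩

theorem _root_.IsCap.affineEquivalent_parallelogram {S : Finset (AG 2)} (hS : IsCap S)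
    (hcard : #S = 4) : AffineEquivalent S parallelogram := by
  obtain ⟨T, hST, h0, h1, h2⟩ := hS.exists_card_slices_of_card_eq_four hcard
  obtain ⟨p, hp⟩ := exists_eq_compl_singleton h1
  obtain ⟨q, hq⟩ := exists_eq_compl_singleton h2
  obtain ⟨U, hTU, hUcard, hU⟩ := exists_affineEquivalent_extendSlices T
    (AffineEquiv.constVAdd (ZMod 3) _ (-p)) (p - q)
  have hU0 : AG.slice U 0 = ∅ := card_eq_zero.1 ((hUcard 0).trans h0)
  have hU1 : AG.slice U 1 = {0}ᶜ := by
    ext y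
    simpa [-mem_slice, hp] using hU 1 (y + p)
  have hU2 : AG.slice U 2 = {0}ᶜ := by
    ext y
    have hy : -p + (y + q) + (p - q) = y := by abel
    simpa [-mem_slice, hq, show (2 - 1 : ZMod 3) = 1 from rfl, hy] using hU 2 (y + q)
  have hUeq : U = parallelogram :=
    ext_slice (hU0.trans (by decide)) (hU1.trans (by decide)) (hU2.trans (by decide))
  exact hUeq ▸ hST.trans hTU

theorem _root_.IsCap.eq_of_disjoint_parallelogram {Q : Finset (AG 2)} (hQ : IsCap Q)
    (hcard : #Q = 4) (hdisj : Disjoint parallelogram Q) :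
    Q = ({x | x 0 * x 0 + x 1 * x 1 = 1} : Finset (AG 2)) := by
  have hcross {x} (hx : x ∈ Q) (hx0 : x ≠ 0) : x 0 * x 0 + x 1 * x 1 = 1 := by
    have h : ∀ x : AG 2, x ∉ parallelogram → x ≠ 0 → x 0 * x 0 + x 1 * x 1 = 1 := by decide
    exact h x (disjoint_right.1 hdisj hx) hx0
  have zero_notMem : 0 ∉ Q := by
    intro h0
    have hmaps : ∀ x ∈ Q.erase 0, x 0 * x 0 ∈ ({0, 1} : Finset (ZMod 3)) := fun x _ => by
      generalize x 0 = a
      decide +revert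
    obtain ⟨x, hx, y, hy, hxy, hsq⟩ := exists_ne_map_eq_of_card_lt_of_maps_to
      (by rw [card_erase_of_mem h0, hcard]; decide) hmaps
    obtain ⟨hx0, hxQ⟩ := mem_erase.1 hx
    obtain ⟨hy0, hyQ⟩ := mem_erase.1 hy
    have hsum : ∀ x y : AG 2, x 0 * x 0 + x 1 * x 1 = 1 → y 0 * y 0 + y 1 * y 1 = 1 →
        x ≠ y → x 0 * x 0 = y 0 * y 0 → 0 + x + y = 0 := by decide
    exact hQ 0 h0 x hxQ y hyQ hx0.symm hy0.symm hxy
      (hsum x y (hcross hxQ hx0) (hcross hyQ hy0) hxy hsq)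
  refine eq_of_subset_of_card_le (fun x hx => ?_) (hcard ▸ by decide)
  simpa using hcross hx (ne_of_mem_of_not_mem hx zero_notMem)

theorem _root_.IsCap.affineEquivalent_paraboloid {S : Finset (AG 3)} (hS : IsCap S)
    (hcard : #S = 9) : AffineEquivalent S paraboloid := by
  obtain ⟨T, hST, h0, h1, h2⟩ := hS.exists_card_slices_of_card_eq_nine hcard
  obtain ⟨f, hf⟩ := ((hST.isCap hS).slice 1).affineEquivalent_parallelogram h1
  obtain ⟨p, hp⟩ := card_eq_one.1 h0
  obtain ⟨U, hTU, hUcard, hU⟩ := exists_affineEquivalent_extendSlices T f (f p)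
  have hUcap : IsCap U := hTU.isCap (hST.isCap hS)
  have hU1 : AG.slice U 1 = parallelogram := by
    ext y
    obtain ⟨x, rfl⟩ := f.surjective y
    simpa [-mem_slice, hf] using hU 1 x
  have h0U : 0 ∈ AG.slice U 0 := by
    simpa [-mem_slice, hp] using hU 0 p
  have hU0 : AG.slice U 0 = {0} :=
    (eq_of_subset_of_card_le (singleton_subset_iff.2 h0U) (by rw [hUcard, h0, card_singleton])).symm
  have hdisj : Disjoint parallelogram (AG.slice U 2) := by
    refine disjoint_right.2 fun z hz hzD => ?_
    have hneg : ∀ x ∈ parallelogram, -x ∈ parallelogram := by decide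
    refine hUcap.sum_slices_ne_zero h0U (hU1 ▸ hneg z hzD) hz ?_
    rw [zero_add, neg_add_cancel]
  have hU2 := (hUcap.slice 2).eq_of_disjoint_parallelogram ((hUcard 2).trans h2) hdisj
  have hUeq : U = paraboloid :=
    ext_slice (hU0.trans (by decide)) (hU1.trans (by decide)) (hU2.trans (by decide))
  exact hUeq ▸ hST.trans hTU

set_option synthInstance.maxHeartbeats 200000 in
-- the long alternation of quantifiers and implications makes `Decidable` synthesis expensive
set_option synthInstance.maxSize 1000 in
theorem sum_card_le_seven : ∀ A C L : Finset (ZMod 3),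
    (∀ s ∈ A, ∀ s' ∈ C, s ≠ s' → -(s + s') ∉ L) → ∀ M : Finset (ZMod 3),
    (∀ s ∈ A, s ∈ C → s ∉ M) → (∀ s ∈ M, ∀ s' ∈ M, s ≠ s' → -(s + s') ∉ L) →
    #A + #C + #L + #M ≤ 7 := by
  decide +kernel

theorem _root_.IsCap.card_le_seven_of_disjoint_paraboloid {B : Finset (AG 3)} (hB : IsCap B)
    (h0 : ∀ x ∈ B, x ∉ paraboloid) (h1 : ∀ x ∈ B, x - ![0, 1, 0] ∉ paraboloid) : #B ≤ 7 := by
  let a (s : ZMod 3) : AG 3 := ![1 - s * s, 0, s]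
  let c (s : ZMod 3) : AG 3 := ![1 - s * s, 1, s]
  let l (s : ZMod 3) : AG 3 := ![-(s * s), -1, s]
  let m (s : ZMod 3) : AG 3 := ![1 - s * s, -1, s]
  have hacl : ∀ s s', s ≠ s' → a s + c s' + l (-(s + s')) = 0 := by decide
  have hacm : ∀ s, a s + c s + m s = 0 := by decide
  have hmml : ∀ s s', s ≠ s' → m s + m s' + l (-(s + s')) = 0 := by decide
  have hac (s s') : a s ≠ c s' := fun h => absurd (congrFun h 1) (show (0 : ZMod 3) ≠ 1 by decide)
  have hmm {s s'} (hs : s ≠ s') : m s ≠ m s' := fun h => hs (congrFun h 2)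
  have hline {x y z} (h : x + y + z = 0) (hxy : x ≠ y) (hx : x ∈ B) (hy : y ∈ B) : z ∉ B :=
    fun hz => hxy ((hB.add_add_eq_zero_iff hx hy hz).1 h).1
  have hcard := sum_card_le_seven {s | a s ∈ B} {s | c s ∈ B} {s | l s ∈ B}
    (by simpa using fun s hs s' hs' hne => hline (hacl s s' hne) (hac s s') hs hs')
    {s | m s ∈ B} (by simpa using fun s => hline (hacm s) (hac s s))
    (by simpa using fun s hs s' hs' hne => hline (hmml s s' hne) (hmm hne) hs hs')
  have hcover : B ⊆ (({s | a s ∈ B} : Finset (ZMod 3)).image a ∪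
      ({s | c s ∈ B} : Finset (ZMod 3)).image c) ∪ (({s | l s ∈ B} : Finset (ZMod 3)).image l ∪
      ({s | m s ∈ B} : Finset (ZMod 3)).image m) := by
    intro x hx
    have h : ∀ x : AG 3, x ∉ paraboloid → x - ![0, 1, 0] ∉ paraboloid →
        (a (x 2) = x ∨ c (x 2) = x) ∨ (l (x 2) = x ∨ m (x 2) = x) := by decide
    have hex {p : ZMod 3 → AG 3} (hp : p (x 2) = x) : ∃ s, p s ∈ B ∧ p s = x :=
      ⟨x 2, hp.symm ▸ hx, hp⟩
    simp only [mem_union, mem_image, mem_filter_univ]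
    exact (h x (h0 x hx) (h1 x hx)).imp (Or.imp hex hex) (Or.imp hex hex)
  have hle (p : ZMod 3 → AG 3) := card_image_le (s := {s | p s ∈ B}) (f := p)
  calc #B ≤ _ := card_le_card hcover
    _ ≤ _ := (card_union_le _ _).trans (add_le_add (card_union_le _ _) (card_union_le _ _))
    _ ≤ _ := add_le_add (add_le_add (hle a) (hle c)) (add_le_add (hle l) (hle m))
    _ ≤ 7 := by rwa [← add_assoc]

theorem exists_affineEquiv_paraboloid {d : AG 3} (hd : d 1 ≠ 0 ∨ d 2 ≠ 0) :
    ∃ g : AG 3 ≃ᵃ[ZMod 3] AG 3, (∀ x ∈ paraboloid, g x ∈ paraboloid) ∧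
      ∀ x, g (x + ![0, 1, 0]) = g x + d := by
  obtain ⟨ν, hν⟩ : ∃ ν, d 1 * d 1 + d 2 * d 2 = ν := ⟨_, rfl⟩
  have hνν : ν * ν = 1 := by
    generalize d 1 = a at *
    generalize d 2 = b at *
    clear * - hd hν
    decide +revert
  let M : Matrix (Fin 3) (Fin 3) (ZMod 3) := !![ν, d 0, 0; 0, d 1, -d 2; 0, d 2, d 1]
  have hdet : IsUnit M.det := by
    refine IsUnit.of_mul_eq_one 1 ?_
    rw [mul_one, ← hνν, ← hν]
    simp [M, det_fin_three, hν]
    linear_combination ν * hν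
  let g₀ := LinearEquiv.ofInjectiveEndo M.mulVecLin
    (mulVec_injective_of_isUnit ((isUnit_iff_isUnit_det M).2 hdet))
  let g := g₀.toAffineEquiv.trans (AffineEquiv.constVAdd (ZMod 3) _
    ![-(ν * d 0 * d 0), ν * d 0 * d 1, ν * d 0 * d 2])
  have hg (x) : g x = ![-(ν * d 0 * d 0), ν * d 0 * d 1, ν * d 0 * d 2] + M *ᵥ x := rfl
  refine ⟨g, fun x hx => ?_, fun x => ?_⟩
  · have hMx : M *ᵥ x =
        ![ν * x 0 + d 0 * x 1, d 1 * x 1 - d 2 * x 2, d 2 * x 1 + d 1 * x 2] := by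
      ext i
      fin_cases i <;> simp [M, mulVec, dotProduct, Fin.sum_univ_three, sub_eq_add_neg]
    have h3 : (3 : ZMod 3) = 0 := rfl
    simp only [paraboloid, mem_filter_univ, hg, hMx] at hx ⊢
    simp only [Pi.add_apply, Matrix.cons_val]
    linear_combination ν * hx + (2 * d 0 * x 1 + ν * d 0 * d 0) * hνν + d 0 * x 1 * h3 +
      ((x 1 + ν * d 0) ^ 2 + x 2 ^ 2) * hν
  · have hMd : M *ᵥ ![0, 1, 0] = d := by
      ext i
      fin_cases i <;> simp [M, mulVec]
    rw [hg, hg, mulVec_add, hMd, add_assoc]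

theorem _root_.IsCap.card_le_seven {B : Finset (AG 3)} (hB : IsCap B) {x y : AG 3}
    (hxy : (y - x) 1 ≠ 0 ∨ (y - x) 2 ≠ 0) (hx : ∀ p ∈ paraboloid, ∀ z ∈ B, x + p + z ≠ 0)
    (hy : ∀ p ∈ paraboloid, ∀ z ∈ B, y + p + z ≠ 0) : #B ≤ 7 := by
  obtain ⟨g, hgP, hg⟩ := exists_affineEquiv_paraboloid hxy
  let f : AG 3 ≃ᵃ[ZMod 3] AG 3 :=
    (g.trans (AffineEquiv.constVAdd (ZMod 3) _ x)).trans (LinearEquiv.neg (ZMod 3)).toAffineEquiv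
  have hf (q) : f q = -(x + g q) := rfl
  have hequiv := affineEquivalent_map B f.symm
  have hmem {q} (hq : q ∈ B.map f.symm.toEquiv.toEmbedding) : f q ∈ B := by
    obtain ⟨z, hz, rfl⟩ := mem_map.1 hq
    exact (f.apply_symm_apply z).symm ▸ hz
  rw [← hequiv.card_eq]
  refine (hequiv.isCap hB).card_le_seven_of_disjoint_paraboloid (fun q hq hqP => ?_)
    fun q hq hqP => ?_
  · refine hx _ (hgP q hqP) _ (hmem hq) ?_
    rw [hf, add_neg_cancel]
  · refine hy _ (hgP _ hqP) _ (hmem hq) ?_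
    have hgq := hg (q - ![0, 1, 0])
    rw [sub_add_cancel] at hgq
    rw [hf, hgq]
    abel

theorem _root_.IsCap.sub_apply_eq_zero_of_mem_slice_zero {S : Finset (AG 4)} (hS : IsCap S)
    (h1 : slice S 1 = paraboloid) (h2 : 7 < #(slice S 2)) {x y : AG 3} (hx : x ∈ AG.slice S 0)
    (hy : y ∈ AG.slice S 0) : (y - x) 1 = 0 ∧ (y - x) 2 = 0 := by
  by_contra hxy
  refine h2.not_ge ((hS.slice 2).card_le_seven (not_and_or.1 hxy) ?_ ?_)
  · exact fun p hp z hz => hS.sum_slices_ne_zero hx (h1 ▸ hp) hz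
  · exact fun p hp z hz => hS.sum_slices_ne_zero hy (h1 ▸ hp) hz

theorem _root_.IsCap.card_le_two_of_sub_apply_eq_zero {B : Finset (AG 3)} (hB : IsCap B)
    (h : ∀ x ∈ B, ∀ y ∈ B, (y - x) 1 = 0 ∧ (y - x) 2 = 0) : #B ≤ 2 := by
  by_contra! hcard
  obtain ⟨x, y, z, hx, hy, hz, hxy, hxz, hyz⟩ := two_lt_card_iff.1 hcard
  have happly_ne {p q} (hp : p ∈ B) (hq : q ∈ B) (hpq : p ≠ q) : p 0 ≠ q 0 := by
    intro h0
    refine hpq (funext fun i => ?_)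
    fin_cases i
    exacts [h0, (sub_eq_zero.1 (h p hp q hq).1).symm, (sub_eq_zero.1 (h p hp q hq).2).symm]
  have hsum : ∀ a b c : ZMod 3, a ≠ b → a ≠ c → b ≠ c → a + b + c = 0 := by decide
  have hsum_self : ∀ {a b c : ZMod 3}, b = a → c = a → a + b + c = 0 := by decide
  refine hB x hx y hy z hz hxy hxz hyz (funext fun i => ?_)
  fin_cases i
  · exact hsum _ _ _ (happly_ne hx hy hxy) (happly_ne hx hz hxz) (happly_ne hy hz hyz)
  · exact hsum_self (sub_eq_zero.1 (h x hx y hy).1) (sub_eq_zero.1 (h x hx z hz).1)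
  · exact hsum_self (sub_eq_zero.1 (h x hx y hy).2) (sub_eq_zero.1 (h x hx z hz).2)

theorem _root_.IsCap.exists_slice_one_eq_paraboloid {S : Finset (AG 4)} (hS : IsCap S)
    (hcard : #S = 20) : ∃ T, AffineEquivalent S T ∧ slice T 1 = paraboloid ∧
      #(slice T 0) = 2 ∧ #(slice T 2) = 9 := by
  obtain ⟨T, hST, h1, h02⟩ := hS.exists_card_slices_of_card_eq_twenty hcard
  obtain ⟨f, hf⟩ := ((hST.isCap hS).slice 1).affineEquivalent_paraboloid h1
  obtain ⟨U, hTU, hUcard, hU⟩ := exists_affineEquivalent_extendSlices T f 0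
  have hUcap := hTU.isCap (hST.isCap hS)
  have hU1 : AG.slice U 1 = paraboloid := by
    ext y
    obtain ⟨x, rfl⟩ := f.surjective y
    simpa [-mem_slice, hf] using hU 1 x
  rw [← hUcard 0, ← hUcard 2] at h02
  have h0 : #(AG.slice U 0) ≤ 2 := (hUcap.slice 0).card_le_two_of_sub_apply_eq_zero
    fun x hx y hy => hUcap.sub_apply_eq_zero_of_mem_slice_zero hU1 (by omega) hx hy
  exact ⟨U, hST.trans hTU, hU1, by omega⟩

theorem _root_.IsCap.exists_slice_zero_eq_pair {S : Finset (AG 4)} (hS : IsCap S)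
    (hcard : #S = 20) : ∃ T, AffineEquivalent S T ∧ AG.slice T 0 = {![1, 0, 0], ![-1, 0, 0]} ∧
      AG.slice T 1 = paraboloid ∧ #(AG.slice T 2) = 9 := by
  obtain ⟨T, hST, h1, h0, h2⟩ := hS.exists_slice_one_eq_paraboloid hcard
  obtain ⟨x, y, hxy, hT0⟩ := card_eq_two.1 h0
  obtain ⟨U, hTU, hUcard, hU⟩ :=
    exists_affineEquivalent_extendSlices T (AffineEquiv.refl (ZMod 3) _) (-(x + y))
  have hTcap := hST.isCap hS
  have hneg (p : AG 3) : p + (0 - 1 : ZMod 3) • (-(x + y)) = p + (x + y) := by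
    rw [zero_sub, neg_one_smul, neg_neg]
  have hsub : y - x ∈ AG.slice U 0 ∧ x - y ∈ AG.slice U 0 := by
    have hyx : y - x = x + (0 - 1 : ZMod 3) • (-(x + y)) := by
      rw [hneg]
      linear_combination (exp := 1) -add_add_self x
    have hxy : x - y = y + (0 - 1 : ZMod 3) • (-(x + y)) := by
      rw [hneg]
      linear_combination (exp := 1) -add_add_self y
    exact ⟨hyx ▸ (hU 0 x).2 (by simp [hT0, -mem_slice]),
      hxy ▸ (hU 0 y).2 (by simp [hT0, -mem_slice])⟩
  have hpole : y - x = ![1, 0, 0] ∨ x - y = ![1, 0, 0] := by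
    have haxis : ∀ d : AG 3, d 1 = 0 ∧ d 2 = 0 → d ≠ 0 →
        d = ![1, 0, 0] ∨ -d = ![1, 0, 0] := by decide
    rw [← neg_sub y x]
    exact haxis _ (hTcap.sub_apply_eq_zero_of_mem_slice_zero h1 (by omega)
      (by simp [hT0, -mem_slice]) (by simp [hT0, -mem_slice])) (sub_ne_zero.2 hxy.symm)
  have hU0 : AG.slice U 0 = {![1, 0, 0], ![-1, 0, 0]} := by
    have hsymm : -(![1, 0, 0] : AG 3) = ![-1, 0, 0] := by decide
    refine (eq_of_subset_of_card_le ?_ (by rw [hUcard, h0]; decide)).symm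
    rw [insert_subset_iff, singleton_subset_iff, ← hsymm]
    obtain h | h := hpole
    · exact h ▸ ⟨hsub.1, (neg_sub y x).symm ▸ hsub.2⟩
    · exact h ▸ ⟨hsub.2, (neg_sub x y).symm ▸ hsub.1⟩
  refine ⟨U, hST.trans hTU, hU0, ?_, (hUcard 2).trans h2⟩
  ext z
  simpa [-mem_slice, h1] using hU 1 z

theorem _root_.IsCap.affineEquivalent_ellipticCone {S : Finset (AG 4)} (hS : IsCap S)
    (hcard : #S = 20) : AffineEquivalent S ellipticCone := by
  obtain ⟨U, hSU, hU0, hU1, h2⟩ := hS.exists_slice_zero_eq_pair hcard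
  have hUcap := hSU.isCap hS
  have hU2 : AG.slice U 2 = ({z | -z ∈ paraboloid} : Finset (AG 3)) := by
    refine eq_of_subset_of_card_le (fun z hz => ?_) (by rw [h2]; decide)
    have hsum {e} (he : e ∈ AG.slice U 0) : -(e + z) ∉ paraboloid := fun h =>
      hUcap.sum_slices_ne_zero he (hU1 ▸ h) hz (by abel)
    have h : ∀ z : AG 3, -(![1, 0, 0] + z) ∉ paraboloid → -(![-1, 0, 0] + z) ∉ paraboloid →
        -z ∈ paraboloid := by decide
    simpa using h z (hsum (by simp [hU0, -mem_slice])) (hsum (by simp [hU0, -mem_slice]))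
  have hUeq : U = ellipticCone :=
    ext_slice (hU0.trans (by decide)) (hU1.trans (by decide)) (hU2.trans (by decide))
  exact hUeq ▸ hSU

theorem card_ellipticCone : #ellipticCone = 20 := by
  decide +kernel

theorem isCap_ellipticCone : IsCap ellipticCone := by
  have h : ∀ x ∈ ellipticCone, ∀ y ∈ ellipticCone, -(x + y) ∈ ellipticCone → x = y := by
    decide +kernel
  exact fun x hx y hy z hz hxy _ _ hsum =>
    hxy (h x hx y hy (neg_eq_of_add_eq_zero_right hsum ▸ hz))

theorem not_isCap_insert_ellipticCone {x : AG 4} (hx : x ∉ ellipticCone) :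
    ¬IsCap (insert x ellipticCone) := by
  have h : ∀ x ∉ ellipticCone, ∃ y ∈ ellipticCone, -(x + y) ∈ ellipticCone ∧ y ≠ -(x + y) := by
    decide +kernel
  obtain ⟨y, hy, hz, hyz⟩ := h x hx
  exact fun hcap => hcap x (mem_insert_self _ _) y (mem_insert_of_mem hy) _
    (mem_insert_of_mem hz) (ne_of_mem_of_not_mem hy hx).symm
    (ne_of_mem_of_not_mem hz hx).symm hyz (add_neg_cancel _)

theorem _root_.IsCap.card_le_twenty {S : Finset (AG 4)} (hS : IsCap S) : #S ≤ 20 := by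
  by_contra! hcard
  obtain ⟨S', hsub, hS'⟩ := exists_subset_card_eq hcard.le
  obtain ⟨x, hxS, hx⟩ := exists_mem_notMem_of_card_lt_card (hS'.trans_lt hcard)
  obtain ⟨f, hf⟩ := (hS.subset hsub).affineEquivalent_ellipticCone hS'
  refine not_isCap_insert_ellipticCone (mt (hf x).1 hx)
    (((affineEquivalent_map S f).isCap hS).subset fun y hy => ?_)
  obtain ⟨y, rfl⟩ := f.surjective y
  refine mem_map_of_mem f.toEquiv.toEmbedding ?_
  obtain h | h := mem_insert.1 hy
  · exact f.injective h ▸ hxS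
  · exact hsub ((hf y).1 h)

theorem _root_.MaximalCap.card_eq_twenty {S : Finset (AG 4)} (hS : MaximalCap S) : #S = 20 :=
  le_antisymm hS.1.card_le_twenty (card_ellipticCone ▸ hS.2 _ isCap_ellipticCone)

theorem affineEquiv_neg_sum {S T : Finset (AG n)} {f : AG n ≃ᵃ[ZMod 3] AG n}
    (hf : ∀ x, f x ∈ T ↔ x ∈ S) (hcard : (#S : ZMod 3) = -1) :
    f (-∑ x ∈ S, x) = -∑ x ∈ T, x := by
  calc f (-∑ x ∈ S, x) = -(∑ x ∈ S, f.linear x + (#S : ZMod 3) • f 0) := by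
        rw [affineEquiv_apply_eq_add, hcard, map_neg, map_sum, neg_one_smul, neg_add, neg_neg]
    _ = -∑ x ∈ S, f x := by
        rw [Nat.cast_smul_eq_nsmul, ← sum_const, ← sum_add_distrib]
        simp only [← affineEquiv_apply_eq_add]
    _ = -∑ x ∈ T, x :=
        congrArg Neg.neg (sum_equiv f.toEquiv (fun x => (hf x).symm) fun _ _ => rfl)

theorem sum_ellipticCone : ∑ x ∈ ellipticCone, x = 0 := by
  refine sum_involution (fun x _ => -x) (fun x _ => add_neg_cancel x) (fun x _ hx h => hx ?_)
    (fun x hx => ?_) fun x _ => neg_neg x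
  · linear_combination (exp := 1) add_add_self x + h
  · simpa [ellipticCone] using hx

theorem _root_.MaximalCap.exists_affineEquiv_ellipticCone {S : Finset (AG 4)}
    (hS : MaximalCap S) : ∃ f : AG 4 ≃ᵃ[ZMod 3] AG 4,
      (∀ x, f x ∈ ellipticCone ↔ x ∈ S) ∧ f (-∑ x ∈ S, x) = 0 := by
  obtain ⟨f, hf⟩ := hS.1.affineEquivalent_ellipticCone hS.card_eq_twenty
  refine ⟨f, hf, ?_⟩
  rw [affineEquiv_neg_sum hf (hS.card_eq_twenty ▸ rfl), sum_ellipticCone, neg_zero]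

theorem mulVec_dotProduct_mulVec_mulVec {ι κ R : Type*} [Fintype ι] [Fintype κ] [CommSemiring R]
    (A : Matrix ι κ R) (B : Matrix ι ι R) (x : κ → R) :
    (A *ᵥ x) ⬝ᵥ B *ᵥ (A *ᵥ x) = x ⬝ᵥ (Aᵀ * B * A) *ᵥ x := by
  rw [← mulVec_mulVec, ← mulVec_mulVec, dotProduct_transpose_mulVec, dotProduct_comm]

theorem isSymm_transpose_mul_mul {ι κ R : Type*} [Fintype ι] [CommSemiring R] (A : Matrix ι κ R)
    {B : Matrix ι ι R} (hB : B.IsSymm) : (Aᵀ * B * A).IsSymm := by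
  rw [Matrix.IsSymm, transpose_mul, transpose_mul, transpose_transpose, hB.eq,
    ← Matrix.mul_assoc]

theorem mul_self_eq_one : ∀ {a : ZMod 3}, a ≠ 0 → a * a = 1 := by
  decide

/-- The symmetric matrix of the quadratic form defining `ellipticCone`; the entry `2` is the
inverse of `2`. -/
def ellipticForm : Matrix (Fin 4) (Fin 4) (ZMod 3) :=
  !![0, 2, 0, 0; 2, 0, 0, 0; 0, 0, 1, 0; 0, 0, 0, 1]

theorem det_ellipticForm : ellipticForm.det = -1 := by
  decide

theorem isSymm_ellipticForm : ellipticForm.IsSymm := by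
  unfold Matrix.IsSymm
  decide

theorem mem_ellipticCone {x : AG 4} :
    x ∈ ellipticCone ↔ x ≠ 0 ∧ x ⬝ᵥ ellipticForm *ᵥ x = 0 := by
  have h : x ⬝ᵥ ellipticForm *ᵥ x = x 0 * x 1 + x 2 * x 2 + x 3 * x 3 := by
    have h3 : (3 : ZMod 3) = 0 := rfl
    simp only [dotProduct, mulVec, ellipticForm, of_apply, cons_val', cons_val_fin_one,
      Fin.sum_univ_four, cons_val_zero, cons_val_one, Matrix.cons_val]
    linear_combination x 0 * x 1 * h3
  rw [h, ellipticCone, mem_filter_univ]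

/-- The value at `(x, y, z)` of the ternary quadratic form with symmetric matrix `b`. -/
def ternaryForm (b₁₁ b₁₂ b₁₃ b₂₂ b₂₃ b₃₃ x y z : ZMod 3) : ZMod 3 :=
  x * (b₁₁ * x + b₁₂ * y + b₁₃ * z) + y * (b₁₂ * x + b₂₂ * y + b₂₃ * z) +
    z * (b₁₃ * x + b₂₃ * y + b₃₃ * z)

/-- The determinant of the symmetric `4 × 4` matrix `b`, expanded along the first two columns. -/
def symmDet (b₀₀ b₀₁ b₀₂ b₀₃ b₁₁ b₁₂ b₁₃ b₂₂ b₂₃ b₃₃ : ZMod 3) : ZMod 3 :=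
  (b₀₀ * b₁₁ - b₀₁ * b₀₁) * (b₂₂ * b₃₃ - b₂₃ * b₂₃) -
    (b₀₀ * b₁₂ - b₀₂ * b₀₁) * (b₁₂ * b₃₃ - b₂₃ * b₁₃) +
    (b₀₀ * b₁₃ - b₀₃ * b₀₁) * (b₁₂ * b₂₃ - b₂₂ * b₁₃) +
    (b₀₁ * b₁₂ - b₀₂ * b₁₁) * (b₀₂ * b₃₃ - b₀₃ * b₂₃) -
    (b₀₁ * b₁₃ - b₀₃ * b₁₁) * (b₀₂ * b₂₃ - b₀₃ * b₂₂) +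
    (b₀₂ * b₁₃ - b₀₃ * b₁₂) * (b₀₂ * b₁₃ - b₀₃ * b₁₂)

section IsSymm

variable {B : Matrix (Fin 4) (Fin 4) (ZMod 3)}

theorem det_eq_symmDet (hB : B.IsSymm) : B.det = symmDet (B 0 0) (B 0 1) (B 0 2) (B 0 3)
    (B 1 1) (B 1 2) (B 1 3) (B 2 2) (B 2 3) (B 3 3) := by
  simp [det_succ_row_zero, Fin.sum_univ_succ, symmDet, Fin.succAbove, hB.apply 0 1, hB.apply 0 2,
    hB.apply 0 3, hB.apply 1 2, hB.apply 1 3, hB.apply 2 3]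
  ring

theorem dotProduct_mulVec_eq_ternaryForm (hB : B.IsSymm) (a b c d : ZMod 3) :
    ![a, b, c, d] ⬝ᵥ B *ᵥ ![a, b, c, d] =
      B 0 0 * (a * a) - a * (B 0 1 * b + B 0 2 * c + B 0 3 * d) +
        ternaryForm (B 1 1) (B 1 2) (B 1 3) (B 2 2) (B 2 3) (B 3 3) b c d := by
  have h3 : (3 : ZMod 3) = 0 := rfl
  simp only [dotProduct, mulVec, Fin.sum_univ_four, cons_val_zero, cons_val_one, Matrix.cons_val,
    ternaryForm, hB.apply 0 1, hB.apply 0 2, hB.apply 0 3, hB.apply 1 2, hB.apply 1 3,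
    hB.apply 2 3]
  linear_combination a * (B 0 1 * b + B 0 2 * c + B 0 3 * d) * h3

end IsSymm

set_option synthInstance.maxHeartbeats 200000 in
-- the long alternation of quantifiers and implications makes `Decidable` synthesis expensive
set_option synthInstance.maxSize 1000 in
-- Each hypothesis stands right after the variables it constrains, which prunes the kernel's
-- exhaustive search early.
theorem symmDet_ne_neg_one : ∀ y b₁₁ b₁₂ b₁₃ b₂₂ b₂₃ b₃₃ : ZMod 3,
    (∀ z w, ternaryForm b₁₁ b₁₂ b₁₃ b₂₂ b₂₃ b₃₃ (-(z * z + w * w) - y) z w = 0 →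
      z = 0 ∧ w = 0 ∧ y = 0) →
    ∀ b₀₀ b₀₁, (∀ t, t ≠ 0 → b₀₀ - b₀₁ * (y - t) + b₁₁ * ((y - t) * (y - t)) ≠ 0) →
    ∀ b₀₂ b₀₃, (∀ z w, b₀₀ - (b₀₁ * (z * z + w * w - y) + b₀₂ * z + b₀₃ * w) +
      ternaryForm b₁₁ b₁₂ b₁₃ b₂₂ b₂₃ b₃₃ (z * z + w * w - y) z w ≠ 0) →
    symmDet b₀₀ b₀₁ b₀₂ b₀₃ b₁₁ b₁₂ b₁₃ b₂₂ b₂₃ b₃₃ ≠ -1 := by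
  decide +kernel

theorem exists_mem_ellipticCone_dotProduct_sub_eq_zero_of_normalized
    {B : Matrix (Fin 4) (Fin 4) (ZMod 3)} (hB : B.IsSymm) (hdet : B.det = -1) (y : ZMod 3) :
    ∃ x ∈ ellipticCone, x - ![1, y, 0, 0] ≠ 0 ∧
      (x - ![1, y, 0, 0]) ⬝ᵥ B *ᵥ (x - ![1, y, 0, 0]) = 0 := by
  by_contra! h
  have hne (a b c d : ZMod 3) (hcone : ![a, b, c, d] ∈ ellipticCone)
      (hne : ![a - 1, b - y, c, d] ≠ 0) :
      B 0 0 * ((a - 1) * (a - 1)) - (a - 1) * (B 0 1 * (b - y) + B 0 2 * c + B 0 3 * d) +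
        ternaryForm (B 1 1) (B 1 2) (B 1 3) (B 2 2) (B 2 3) (B 3 3) (b - y) c d ≠ 0 := by
    have hsub : ![a, b, c, d] - ![1, y, 0, 0] = ![a - 1, b - y, c, d] := by simp
    rw [← dotProduct_mulVec_eq_ternaryForm hB, ← hsub]
    exact h _ hcone (hsub ▸ hne)
  refine symmDet_ne_neg_one y (B 1 1) (B 1 2) (B 1 3) (B 2 2) (B 2 3) (B 3 3) ?_ (B 0 0) (B 0 1) ?_
    (B 0 2) (B 0 3) ?_ (by rw [← det_eq_symmDet hB, hdet])
  · intro z w hzw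
    by_contra h0
    refine hne 1 (-(z * z + w * w)) z w (by simp [ellipticCone]) ?_ ?_
    · intro hv
      obtain rfl : z = 0 := congrFun hv 2
      obtain rfl : w = 0 := congrFun hv 3
      exact h0 ⟨rfl, rfl, by simpa using congrFun hv 1⟩
    · rw [hzw, sub_self]
      simp
  · intro t ht h0
    refine hne 0 t 0 0 (by simp [ellipticCone, ht]) (by simp) (Eq.trans ?_ h0)
    simp only [ternaryForm]
    ring
  · intro z w
    have hone : (-1 - 1 : ZMod 3) = 1 := rfl
    have hv : ![-1 - 1, z * z + w * w - y, z, w] ≠ 0 := fun h => absurd (congrFun h 0)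
      (show (-1 - 1 : ZMod 3) ≠ 0 by decide)
    simpa only [hone, one_mul, mul_one] using
      hne (-1) (z * z + w * w) z w (by simp [ellipticCone]) hv

/-- The isometries of `ellipticForm`, as matrices. -/
def IsEllipticIsometry (G : Matrix (Fin 4) (Fin 4) (ZMod 3)) : Prop :=
  Gᵀ * ellipticForm * G = ellipticForm

namespace IsEllipticIsometry

variable {G H : Matrix (Fin 4) (Fin 4) (ZMod 3)}

theorem mul (hG : IsEllipticIsometry G) (hH : IsEllipticIsometry H) :
    IsEllipticIsometry (G * H) := by
  unfold IsEllipticIsometry at *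
  rw [transpose_mul, mul_assoc Hᵀ, mul_assoc Hᵀ, ← mul_assoc _ G, hG, ← mul_assoc, hH]

theorem det_mul_self (hG : IsEllipticIsometry G) : G.det * G.det = 1 := by
  have h := congrArg det hG
  rw [det_mul, det_mul, det_transpose, det_ellipticForm] at h
  linear_combination -h

theorem mulVec_eq_zero_iff (hG : IsEllipticIsometry G) {x : AG 4} : G *ᵥ x = 0 ↔ x = 0 :=
  ⟨eq_zero_of_mulVec_eq_zero (left_ne_zero_of_mul_eq_one hG.det_mul_self),
    fun h => h ▸ mulVec_zero G⟩

theorem mulVec_mem_ellipticCone_iff (hG : IsEllipticIsometry G) {x : AG 4} :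
    G *ᵥ x ∈ ellipticCone ↔ x ∈ ellipticCone := by
  rw [mem_ellipticCone, mem_ellipticCone, Ne, hG.mulVec_eq_zero_iff,
    mulVec_dotProduct_mulVec_mulVec, hG]

end IsEllipticIsometry

/-- An Eichler transformation: the isometry of `ellipticForm` fixing the singular vector
`![0, 1, 0, 0]` and mapping `![1, 0, 0, 0]` to a vector with last two coordinates `u`. -/
def eichler (u : AG 2) : Matrix (Fin 4) (Fin 4) (ZMod 3) :=
  !![1, 0, 0, 0; -(u 0 * u 0 + u 1 * u 1), 1, u 0, u 1; u 0, 0, 1, 0; u 1, 0, 0, 1]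

theorem isEllipticIsometry_eichler : ∀ u, IsEllipticIsometry (eichler u) := by
  unfold IsEllipticIsometry
  decide

theorem eichler_mulVec (u : AG 2) (v : AG 4) : eichler u *ᵥ v =
    ![v 0, v 1 + u 0 * v 2 + u 1 * v 3 - (u 0 * u 0 + u 1 * u 1) * v 0, v 2 + u 0 * v 0,
      v 3 + u 1 * v 0] := by
  ext i
  fin_cases i <;> simp [eichler, mulVec, dotProduct, Fin.sum_univ_four] <;> ring

theorem exists_isEllipticIsometry_of_apply_zero_ne_zero {v : AG 4} (hv : v 0 ≠ 0) :
    ∃ G, IsEllipticIsometry G ∧ ∃ y, G *ᵥ ![1, y, 0, 0] = v := by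
  have hsq := mul_self_eq_one hv
  refine ⟨v 0 • eichler ![v 0 * v 2, v 0 * v 3], ?_,
    v 0 * v 1 + (v 2 * v 2 + v 3 * v 3), ?_⟩
  · rw [IsEllipticIsometry, transpose_smul, smul_mul_assoc, smul_mul_assoc, mul_smul_comm,
      smul_smul, hsq, one_smul, isEllipticIsometry_eichler]
  · rw [smul_mulVec, eichler_mulVec]
    ext i
    fin_cases i <;> simp
    · linear_combination (v 1 - v 0 * (v 2 * v 2 + v 3 * v 3)) * hsq
    · linear_combination v 2 * hsq
    · linear_combination v 3 * hsq

theorem exists_isEllipticIsometry {v : AG 4} (hv : v ≠ 0) :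
    ∃ G, IsEllipticIsometry G ∧ ∃ y, G *ᵥ ![1, y, 0, 0] = v := by
  have of_inverse {A A'} (hA : IsEllipticIsometry A) (hAA' : A * A' = 1)
      (h0 : (A' *ᵥ v) 0 ≠ 0) : ∃ G, IsEllipticIsometry G ∧ ∃ y, G *ᵥ ![1, y, 0, 0] = v := by
    obtain ⟨G, hG, y, hGy⟩ := exists_isEllipticIsometry_of_apply_zero_ne_zero h0
    exact ⟨A * G, hA.mul hG, y, by rw [← mulVec_mulVec, hGy, mulVec_mulVec, hAA', one_mulVec]⟩
  let swap : Matrix (Fin 4) (Fin 4) (ZMod 3) := !![0, 1, 0, 0; 1, 0, 0, 0; 0, 0, 1, 0; 0, 0, 0, 1]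
  have hswap : IsEllipticIsometry swap := by
    unfold IsEllipticIsometry
    decide
  have hswap_mul : swap * swap = 1 := by decide
  have hswap_apply (w) : (swap *ᵥ w) 0 = w 1 := by
    simp [swap, mulVec, dotProduct, Fin.sum_univ_four]
  have heichler_mul : ∀ u, eichler (-u) * eichler u = 1 := by decide
  by_cases h0 : v 0 = 0
  · by_cases h1 : v 1 = 0
    · have hnorm : v 2 * v 2 + v 3 * v 3 ≠ 0 := by
        have h : ∀ v : AG 4, v 0 = 0 → v 1 = 0 → v ≠ 0 → v 2 * v 2 + v 3 * v 3 ≠ 0 := by decide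
        exact h v h0 h1 hv
      refine of_inverse (A := eichler (-![v 2, v 3]) * swap) (A' := swap * eichler ![v 2, v 3])
        ((isEllipticIsometry_eichler _).mul hswap) ?_ ?_
      · rw [mul_assoc, ← mul_assoc swap, hswap_mul, one_mul, heichler_mul]
      · rw [← mulVec_mulVec, hswap_apply, eichler_mulVec]
        simpa [h0, h1] using hnorm
    · exact of_inverse hswap hswap_mul ((hswap_apply v).trans_ne h1)
  · exact exists_isEllipticIsometry_of_apply_zero_ne_zero h0

theorem exists_mem_ellipticCone_dotProduct_sub_eq_zero {B : Matrix (Fin 4) (Fin 4) (ZMod 3)}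
    (hB : B.IsSymm) (hdet : B.det = -1) {v : AG 4} (hv : v ≠ 0) :
    ∃ x ∈ ellipticCone, x - v ≠ 0 ∧ (x - v) ⬝ᵥ B *ᵥ (x - v) = 0 := by
  obtain ⟨G, hG, y, rfl⟩ := exists_isEllipticIsometry hv
  have hdetG : (Gᵀ * B * G).det = -1 := by
    rw [det_mul, det_mul, det_transpose, mul_right_comm, hG.det_mul_self, one_mul, hdet]
  obtain ⟨x, hx, hne, hzero⟩ := exists_mem_ellipticCone_dotProduct_sub_eq_zero_of_normalized
    (isSymm_transpose_mul_mul G hB) hdetG y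
  refine ⟨G *ᵥ x, hG.mulVec_mem_ellipticCone_iff.2 hx, ?_⟩
  rw [← mulVec_sub, mulVec_dotProduct_mulVec_mulVec]
  exact ⟨hG.mulVec_eq_zero_iff.not.2 hne, hzero⟩

theorem exists_mem_ellipticCone_apply_mem_ellipticCone (h : AG 4 ≃ᵃ[ZMod 3] AG 4)
    (h0 : h 0 ≠ 0) : ∃ x ∈ ellipticCone, h x ∈ ellipticCone := by
  let M := h.linear.toLinearMap.toMatrix'
  have hM (x) : h x = M *ᵥ (x - h.symm 0) := by
    rw [LinearMap.toMatrix'_mulVec]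
    simpa using (h.toAffineMap.linearMap_vsub x (h.symm 0)).symm
  have hdetM : M.det ≠ 0 := by
    rw [LinearMap.det_toMatrix']
    exact h.linear.isUnit_det'.ne_zero
  have hdet : (Mᵀ * ellipticForm * M).det = -1 := by
    rw [det_mul, det_mul, det_transpose, mul_right_comm, mul_self_eq_one hdetM, one_mul,
      det_ellipticForm]
  obtain ⟨x, hx, hne, hzero⟩ := exists_mem_ellipticCone_dotProduct_sub_eq_zero
    (isSymm_transpose_mul_mul M isSymm_ellipticForm) hdet (v := h.symm 0)
    (mt h.symm_apply_eq.1 h0.symm)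
  refine ⟨x, hx, mem_ellipticCone.2 ⟨?_, ?_⟩⟩
  · exact fun hx0 => hne (sub_eq_zero.2 (h.eq_symm_apply.2 hx0))
  · rw [hM, mulVec_dotProduct_mulVec_mulVec, hzero]

end AG

/-- Any two maximal caps in `AG(4,3)` with different anchor points intersect. -/
theorem maximal_caps_AG43_different_anchors_intersect
    (S T : Finset (Fin 4 → ZMod 3)) (hS : MaximalCap S) (hT : MaximalCap T)
    (hanchor : (-∑ x ∈ S, x) ≠ (-∑ x ∈ T, x)) :
    (S ∩ T).Nonempty := by
  obtain ⟨f, hf, hf0⟩ := hS.exists_affineEquiv_ellipticCone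
  obtain ⟨g, hg, hg0⟩ := hT.exists_affineEquiv_ellipticCone
  have hne : f.symm.trans g 0 ≠ 0 := by
    intro h0
    refine hanchor (g.injective (Eq.trans ?_ hg0.symm))
    rwa [f.eq_symm_apply.2 hf0]
  obtain ⟨x, hx, hgx⟩ := AG.exists_mem_ellipticCone_apply_mem_ellipticCone (f.symm.trans g) hne
  obtain ⟨x, rfl⟩ := f.surjective x
  exact ⟨x, Finset.mem_inter.2 ⟨(hf x).1 hx, (hg x).1 (by simpa using hgx)⟩⟩
end
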